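/- arXiv:1705.02993 — 3 statements merged into one kernel-verified Lean document; each statement's English description precedes it below -/
import Mathlib

section
/- Fix an integer d ≥ 2. There exists a constant C > 0 such that for every prime p, the proportion of tuples S = (g₁, …, g_d) ∈ (SL₂(ℤ/pℤ))^d (with respect to the uniform measure) for which there exists a nontrivial word of length at most (1/2)·log_{2d−1}(p) whose evaluation at S equals id or −id is at most C·p^{−1/4}. -/
open MeasureTheory

noncomputable section

abbrev SL (n p : ℕ) := Matrix.SpecialLinearGroup (Fin n) (ZMod p)

/-- Density of the Kesten–McKay law with parameter `2d`. -/
noncomputable def kmDensity (d : ℕ) (x : ℝ) : ℝ :=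
  if x ^ 2 ≤ 4 * (2 * (d : ℝ) - 1) then
    2 * d * Real.sqrt (4 * (2 * (d : ℝ) - 1) - x ^ 2) /
      (2 * Real.pi * ((2 * (d : ℝ)) ^ 2 - x ^ 2))
  else 0

/-- The Kesten–McKay law with parameter `2d`, as a measure on `ℝ`. -/
noncomputable def kestenMcKay (d : ℕ) : Measure ℝ :=
  MeasureTheory.volume.withDensity fun x => ENNReal.ofReal (kmDensity d x)

/-- Discrepancy between two measures on ℝ. -/
noncomputable def discrepancy (ν μ : Measure ℝ) : ℝ :=
  sSup {r : ℝ | ∃ a b : ℝ, a ≤ b ∧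
    r = |(ν (Set.Icc a b)).toReal - (μ (Set.Icc a b)).toReal|}

/-- The element of the free group on `d` generators given by a word of length `m`. -/
def wordProd {d m : ℕ} (w : Fin m → Fin d × Bool) : FreeGroup (Fin d) :=
  (List.ofFn fun j => if (w j).2 then FreeGroup.of (w j).1 else (FreeGroup.of (w j).1)⁻¹).prod

/-- Evaluation of a word of length `m` in `d` letters at a tuple `S`. -/
def wordEval {G : Type*} [Group G] {d m : ℕ} (S : Fin d → G) (w : Fin m → Fin d × Bool) : G :=
  (List.ofFn fun j => if (w j).2 then S (w j).1 else (S (w j).1)⁻¹).prod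

/-- `N(d,m)`: the number of trivial words of length `m` in `d` letters. -/
noncomputable def Ntriv (d m : ℕ) : ℕ :=
  Nat.card {w : Fin m → Fin d × Bool // wordProd w = 1}

/-- `A_{π,S} = Σᵢ (π gᵢ + (π gᵢ)⁻¹)`. -/
noncomputable def Amat {G : Type*} [Group G] {n d : ℕ}
    (π : G →* Matrix.unitaryGroup (Fin n) ℂ) (S : Fin d → G) : Matrix (Fin n) (Fin n) ℂ :=
  ∑ i, ((π (S i) : Matrix (Fin n) (Fin n) ℂ) + ((π (S i))⁻¹ : Matrix (Fin n) (Fin n) ℂ))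

/-- Spectral probability measure of a Hermitian matrix. -/
noncomputable def specMeasure {n : ℕ} (A : Matrix (Fin n) (Fin n) ℂ) : Measure ℝ := by
  classical
  exact if hA : A.IsHermitian then
    (n : ENNReal)⁻¹ • ∑ j : Fin n, Measure.dirac (hA.eigenvalues j) else 0

/-- A unitary representation is irreducible if the only invariant subspaces are `⊥` and `⊤`. -/
def IsIrreducibleRep {G : Type*} [Group G] {n : ℕ}
    (π : G →* Matrix.unitaryGroup (Fin n) ℂ) : Prop :=
  ∀ W : Submodule ℂ (Fin n → ℂ),
    (∀ g : G, ∀ v ∈ W, (π g : Matrix (Fin n) (Fin n) ℂ).mulVec v ∈ W) → W = ⊥ ∨ W = ⊤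

/-- Number of eigenvalues of a Hermitian matrix with `|λ| > t`, with multiplicity. -/
noncomputable def excCount {n : ℕ} (A : Matrix (Fin n) (Fin n) ℂ) (t : ℝ) : ℕ := by
  classical
  exact if hA : A.IsHermitian then
    (Finset.univ.filter fun j : Fin n => t < |hA.eigenvalues j|).card else 0

end

section
open Finset
lemma avg_aux {G T : Type*} [Group G] [Fintype G] [DecidableEq G] [Fintype T] (A : Finset G) (σ : T → G) (k : ℕ)
    (h : ∀ x, (univ.filter (fun t => x * σ t ∈ A)).card ≤ k) :
    Fintype.card T * A.card ≤ k * Fintype.card G := by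
  have h1 := Finset.sum_card_bipartiteAbove_eq_sum_card_bipartiteBelow
    (s := (univ : Finset G)) (t := (univ : Finset T)) (fun x t => x * σ t ∈ A)
  have h2 : ∀ t : T, (Finset.bipartiteBelow (fun x t => x * σ t ∈ A) (univ : Finset G) t).card = A.card := by
    intro t
    apply Finset.card_bij (fun x _ => x * σ t)
    · intro a ha
      simpa [Finset.bipartiteBelow] using ha
    · intro a _ b _ hab
      exact mul_right_cancel hab
    · intro b hb
      exact ⟨b * (σ t)⁻¹, by simpa [Finset.bipartiteBelow] using hb, by simp⟩
  simp only [h2, sum_const, card_univ, smul_eq_mul] at h1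
  rw [← h1]
  calc _ ≤ ∑ x : G, k := Finset.sum_le_sum fun x _ => h x
    _ = _ := by simp [mul_comm]

variable {F : Type*} [Field F]

def om (x y : Fin 2 → F) : F := x 0 * y 1 - x 1 * y 0

lemma om_swap (x y : Fin 2 → F) : om x y = - om y x := by simp [om]; ring
lemma om_neg (x y : Fin 2 → F) : om x (-y) = - om x y := by simp [om]; ring
lemma om_smul (c : F) (x y : Fin 2 → F) : om x (c • y) = c * om x y := by simp [om]; ring

open Polynomial Matrix in
lemma word_poly {α : Type*} (A : α → Matrix (Fin 2) (Fin 2) F) (κ ι : α → Fin 2 → F)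
    (M : F → α → Matrix (Fin 2) (Fin 2) F)
    (hM : ∀ t a v, M t a *ᵥ v = A a *ᵥ v + (t * om (κ a) v) • ι a)
    (u : Fin 2 → F) (l : List α) (hl : l.IsChain (fun a b => om (κ a) (ι b) ≠ 0))
    (hu : ∀ a ∈ l.getLast?, om (κ a) u ≠ 0) :
    ∃ q : Fin 2 → F[X], (∀ k, (q k).natDegree ≤ l.length) ∧
      (∀ t k, (q k).eval t = ((l.map (M t)).prod *ᵥ u) k) ∧
      ∃ c : F, c ≠ 0 ∧ (fun k => (q k).coeff l.length) = c • ((l.head?.map ι).getD u) := by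
  induction l with
  | nil =>
    refine ⟨fun k => C (u k), by simp, by simp, 1, one_ne_zero, ?_⟩
    ext k; simp
  | cons a l ih =>
    rw [List.isChain_cons] at hl
    obtain ⟨q, hd, he, c, hc, hq⟩ := ih hl.2 (by
      intro b hb
      apply hu
      cases l with
      | nil => simp at hb
      | cons x l => simpa using hb)
    have key : om (κ a) ((l.head?.map ι).getD u) ≠ 0 := by
      cases l with
      | nil => simpa using hu a (by simp)
      | cons x l => simpa using hl.1 x (by simp)
    refine ⟨fun k => C (A a k 0) * q 0 + C (A a k 1) * q 1 +
      C (ι a k) * (X * (C (κ a 0) * q 1 - C (κ a 1) * q 0)), ?_, ?_, c * om (κ a) ((l.head?.map ι).getD u), mul_ne_zero hc key, ?_⟩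
    · intro k
      have h0 := hd 0
      have h1 := hd 1
      have d1 : ∀ (c : F) j, (C c * q j).natDegree ≤ l.length := fun c j =>
        (natDegree_C_mul_le _ _).trans (hd j)
      have d2 : (C (κ a 0) * q 1 - C (κ a 1) * q 0).natDegree ≤ l.length :=
        (natDegree_sub_le _ _).trans (max_le (d1 _ _) (d1 _ _))
      have d3 : (X * (C (κ a 0) * q 1 - C (κ a 1) * q 0)).natDegree ≤ l.length + 1 := by
        refine natDegree_mul_le.trans ?_
        have := natDegree_X_le (R := F)
        omega
      simp only [List.length_cons]
      refine (natDegree_add_le _ _).trans (max_le ((natDegree_add_le _ _).trans (max_le ?_ ?_)) ?_)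
      · exact (d1 _ _).trans (Nat.le_succ _)
      · exact (d1 _ _).trans (Nat.le_succ _)
      · exact (natDegree_C_mul_le _ _).trans d3
    · intro t k
      simp only [List.map_cons, List.prod_cons]
      rw [← Matrix.mulVec_mulVec, hM]
      simp only [eval_add, eval_mul, eval_C, eval_X, eval_sub, he, Pi.add_apply, Pi.smul_apply,
        smul_eq_mul, om]
      generalize (List.map (M t) l).prod *ᵥ u = z
      rw [Matrix.mulVec, dotProduct, Fin.sum_univ_two]
      ring
    · have hz : ∀ j, (q j).coeff (l.length + 1) = 0 := fun j =>
        coeff_eq_zero_of_natDegree_lt (by have := hd j; omega)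
      rw [← om_smul, ← hq]
      ext k
      simp only [List.length_cons, coeff_add, coeff_C_mul, hz, coeff_X_mul, coeff_sub, om,
        List.head?_cons, Option.map_some, Option.getD_some, Pi.smul_apply, smul_eq_mul]
      ring

open Polynomial Matrix in
lemma word_count [Fintype F] [DecidableEq F] {α : Type*} (A : α → Matrix (Fin 2) (Fin 2) F) (κ ι : α → Fin 2 → F)
    (M : F → α → Matrix (Fin 2) (Fin 2) F)
    (hM : ∀ t a v, M t a *ᵥ v = A a *ᵥ v + (t * om (κ a) v) • ι a)
    (hs : ∀ a, om (κ a) (ι a) ≠ 0)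
    (l : List α) (hl : l.IsChain (fun a b => om (κ a) (ι b) ≠ 0)) (hne : l ≠ [])
    (ε : F) :
    (univ.filter (fun t => (l.map (M t)).prod = ε • (1 : Matrix (Fin 2) (Fin 2) F))).card ≤ l.length := by
  classical
  set u := ι (l.getLast hne)
  obtain ⟨q, hd, he, c, hc, hq⟩ := word_poly A κ ι M hM u l hl (by
    intro a ha
    rw [List.getLast?_eq_getLast_of_ne_nil hne] at ha
    simp only [Option.mem_def, Option.some.injEq] at ha
    subst ha
    exact hs _)
  obtain ⟨a, l, rfl⟩ := List.exists_cons_of_ne_nil hne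
  simp only [List.head?_cons, Option.map_some, Option.getD_some] at hq
  have hk : ∃ k, ι a k ≠ 0 := by
    by_contra hcon
    push Not at hcon
    apply hs a
    simp [om, hcon]
  obtain ⟨k, hk⟩ := hk
  have hck : (q k - C (ε * u k)).coeff (a :: l).length ≠ 0 := by
    have := congrFun hq k
    simp only [Pi.smul_apply, smul_eq_mul] at this
    rw [coeff_sub, this, List.length_cons, coeff_C_succ, sub_zero]
    exact mul_ne_zero hc hk
  have hpn : q k - C (ε * u k) ≠ 0 := by
    intro h0; rw [h0] at hck; simp at hck
  have hdeg : (q k - C (ε * u k)).natDegree ≤ (a :: l).length :=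
    (natDegree_sub_le _ _).trans (max_le (hd k) (by rw [natDegree_C]; exact Nat.zero_le _))
  refine le_trans ?_ ((card_roots' (q k - C (ε * u k))).trans hdeg)
  refine le_trans (Finset.card_le_card ?_) (Multiset.toFinset_card_le _)
  intro t ht
  simp only [mem_filter, mem_univ, true_and] at ht
  rw [Multiset.mem_toFinset, mem_roots hpn, IsRoot, eval_sub, he, ht]
  simp [Matrix.smul_mulVec]

end
section
open Finset Matrix

variable {p : ℕ} [Fact p.Prime] {d : ℕ}

/-- The fixed vector `(1, i)`. -/
def ell (p : ℕ) (i : Fin d) : Fin 2 → ZMod p := ![1, ((i : ℕ) : ZMod p)]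

/-- The unipotent element `1 + t N` with `N v = om ℓ v • ℓ`. -/
def Uel (i : Fin d) (t : ZMod p) : SL 2 p :=
  ⟨!![1 - t * ((i : ℕ) : ZMod p), t; -t * ((i : ℕ) : ZMod p) ^ 2, 1 + t * ((i : ℕ) : ZMod p)], by
    rw [Matrix.det_fin_two_of]; ring⟩

/-- Lower unipotent element. -/
def Vel (t : ZMod p) : SL 2 p :=
  ⟨!![1, 0; t, 1], by rw [Matrix.det_fin_two_of]; ring⟩

lemma Uel_mulVec (i : Fin d) (t : ZMod p) (v : Fin 2 → ZMod p) :
    (Uel i t : Matrix (Fin 2) (Fin 2) (ZMod p)) *ᵥ v = v + (t * om (ell p i) v) • ell p i := by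
  ext k
  fin_cases k <;> simp [Uel, om, ell, Matrix.mulVec, dotProduct, Fin.sum_univ_two] <;> ring

lemma Uel_inv_mulVec (i : Fin d) (t : ZMod p) (v : Fin 2 → ZMod p) :
    (((Uel i t)⁻¹ : SL 2 p) : Matrix (Fin 2) (Fin 2) (ZMod p)) *ᵥ v
      = v - (t * om (ell p i) v) • ell p i := by
  rw [Matrix.SpecialLinearGroup.SL2_inv_expl]
  ext k
  fin_cases k <;> simp [Uel, om, ell, Matrix.mulVec, dotProduct, Fin.sum_univ_two] <;> ring

lemma om_SL (g : SL 2 p) (x y : Fin 2 → ZMod p) :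
    om ((g : Matrix (Fin 2) (Fin 2) (ZMod p)) *ᵥ x) ((g : Matrix (Fin 2) (Fin 2) (ZMod p)) *ᵥ y)
      = om x y := by
  have h := g.det_coe
  rw [Matrix.det_fin_two] at h
  simp only [om, Matrix.mulVec, dotProduct, Fin.sum_univ_two]
  linear_combination (x 0 * y 1 - x 1 * y 0) * h

/-- `m_i = g_i ℓ_i`. -/
def mvec (S : Fin d → SL 2 p) (i : Fin d) : Fin 2 → ZMod p :=
  (S i : Matrix (Fin 2) (Fin 2) (ZMod p)) *ᵥ ell p i

lemma om_inv_SL (S : Fin d → SL 2 p) (i : Fin d) (v : Fin 2 → ZMod p) :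
    om (ell p i) (((S i)⁻¹ : SL 2 p).1 *ᵥ v) = om (mvec S i) v := by
  rw [← om_SL (S i)]
  rw [Matrix.mulVec_mulVec, ← Matrix.SpecialLinearGroup.coe_mul, mul_inv_cancel,
    Matrix.SpecialLinearGroup.coe_one, Matrix.one_mulVec]
  rfl

def GoodT (S : Fin d → SL 2 p) : Prop :=
  (∀ i j : Fin d, om (mvec S i) (ell p j) ≠ 0) ∧ ∀ i j : Fin d, i ≠ j → om (mvec S i) (mvec S j) ≠ 0

lemma mvec_shift (S : Fin d → SL 2 p) (t : ZMod p) : mvec (S * fun i => Uel i t) = mvec S := by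
  ext i : 1
  simp only [mvec, Pi.mul_apply, Matrix.SpecialLinearGroup.coe_mul]
  rw [← Matrix.mulVec_mulVec, Uel_mulVec]
  simp [om, mul_comm]

lemma good_shift (S : Fin d → SL 2 p) (t : ZMod p) : GoodT (S * fun i => Uel i t) ↔ GoodT S := by
  simp [GoodT, mvec_shift]

lemma om_ell (hdp : d ≤ p) (i j : Fin d) (h : i ≠ j) : om (ell p i) (ell p j) ≠ 0 := by
  simp only [om, ell]
  simp only [Matrix.cons_val_zero, Matrix.cons_val_one, one_mul, mul_one]
  rw [sub_ne_zero]
  intro h'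
  rw [ZMod.natCast_eq_natCast_iff', Nat.mod_eq_of_lt (by omega), Nat.mod_eq_of_lt (by omega)] at h'
  exact h (Fin.ext h'.symm)

/-- Letters evaluated at a tuple. -/
def lett (S : Fin d → SL 2 p) (a : Fin d × Bool) : SL 2 p := bif a.2 then S a.1 else (S a.1)⁻¹

lemma word_count_SL (hdp : d ≤ p) (S : Fin d → SL 2 p) (hS : GoodT S) (l : List (Fin d × Bool))
    (hl : FreeGroup.IsReduced l) (hne : l ≠ []) (ε : ZMod p) :
    (univ.filter (fun t : ZMod p =>
      (((l.map (lett (S * fun i => Uel i t))).prod : SL 2 p) : Matrix (Fin 2) (Fin 2) (ZMod p))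
        = ε • (1 : Matrix (Fin 2) (Fin 2) (ZMod p)))).card ≤ l.length := by
  set κ : Fin d × Bool → Fin 2 → ZMod p := fun a => bif a.2 then ell p a.1 else mvec S a.1 with hκ
  set ι : Fin d × Bool → Fin 2 → ZMod p := fun a => bif a.2 then mvec S a.1 else - ell p a.1 with hι
  have hch : ∀ a b : Fin d × Bool, (a.1 = b.1 → a.2 = b.2) → om (κ a) (ι b) ≠ 0 := by
    rintro ⟨i, bi⟩ ⟨j, bj⟩ hab
    cases bi <;> cases bj <;> simp only [hκ, hι, cond_true, cond_false] 
    · rw [om_neg]; exact neg_ne_zero.2 (hS.1 i j)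
    · exact hS.2 i j (fun h => by simpa using hab h)
    · rw [om_neg]; exact neg_ne_zero.2 (om_ell hdp i j (fun h => by simpa using hab h))
    · rw [om_swap]; exact neg_ne_zero.2 (hS.1 j i)
  have := word_count (fun a => (lett S a : Matrix (Fin 2) (Fin 2) (ZMod p))) κ ι
    (fun t a => (lett (S * fun i => Uel i t) a : Matrix (Fin 2) (Fin 2) (ZMod p)))
    (by
      rintro t ⟨i, b⟩ v
      cases b
      · simp only [lett, hκ, hι, cond_false, Pi.mul_apply, _root_.mul_inv_rev,
          Matrix.SpecialLinearGroup.coe_mul]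
        rw [← Matrix.mulVec_mulVec, Uel_inv_mulVec, om_inv_SL]
        simp [sub_eq_add_neg]
      · simp only [lett, hκ, hι, cond_true, Pi.mul_apply,
          Matrix.SpecialLinearGroup.coe_mul]
        rw [← Matrix.mulVec_mulVec, Uel_mulVec, Matrix.mulVec_add, Matrix.mulVec_smul]
        rfl)
    (fun a => hch a a (fun _ => rfl)) l (List.IsChain.imp hch hl) hne ε
  refine le_trans (le_of_eq ?_) this
  congr 1
  ext t
  simp only [mem_filter, mem_univ, true_and]
  have hco : (((l.map (lett (S * fun i => Uel i t))).prod : SL 2 p) : Matrix (Fin 2) (Fin 2) (ZMod p))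
    = (l.map (fun a => (lett (S * fun i => Uel i t) a : Matrix (Fin 2) (Fin 2) (ZMod p)))).prod := by
    clear * -
    induction l with
    | nil => simp
    | cons a l ih => simp only [List.map_cons, List.prod_cons, Matrix.SpecialLinearGroup.coe_mul, ih]
  rw [hco]

open Classical in
lemma word_prob (hdp : d ≤ p) (l : List (Fin d × Bool))
    (hl : FreeGroup.IsReduced l) (hne : l ≠ []) :
    p * (univ.filter (fun S : Fin d → SL 2 p => GoodT S ∧ 
      (FreeGroup.lift S (FreeGroup.mk l) = 1 ∨ 
        ((FreeGroup.lift S (FreeGroup.mk l) : SL 2 p) : Matrix (Fin 2) (Fin 2) (ZMod p)) = -1))).card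
      ≤ (2 * l.length) * Fintype.card (Fin d → SL 2 p) := by
  have := avg_aux (univ.filter (fun S : Fin d → SL 2 p => GoodT S ∧ 
      (FreeGroup.lift S (FreeGroup.mk l) = 1 ∨ 
        ((FreeGroup.lift S (FreeGroup.mk l) : SL 2 p) : Matrix (Fin 2) (Fin 2) (ZMod p)) = -1)))
      (fun (t : ZMod p) => (fun i => Uel i t)) (2 * l.length) (by
    intro S
    by_cases hS : GoodT S
    · have h1 := word_count_SL hdp S hS l hl hne 1
      have h2 := word_count_SL hdp S hS l hl hne (-1)
      rw [two_mul]
      refine le_trans (le_trans (card_le_card ?_) (card_union_le _ _)) (add_le_add h1 h2)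
      intro t ht
      rw [mem_filter, mem_filter] at ht
      have ht := ht.2.2.2
      rw [FreeGroup.lift_mk] at ht
      rw [mem_union, mem_filter, mem_filter]
      rcases ht with h | h
      · left
        refine ⟨mem_univ _, ?_⟩
        have := congrArg (Subtype.val) h
        rw [one_smul]
        exact this
      · right
        refine ⟨mem_univ _, ?_⟩
        rw [neg_one_smul]
        exact h
    · rw [card_eq_zero.2]
      · exact Nat.zero_le _
      · rw [filter_eq_empty_iff]
        intro t _ ht
        rw [mem_filter, good_shift] at ht
        exact hS ht.2.1)
  rwa [ZMod.card] at this

open Classical in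
/-- The generic bad event. -/
lemma bad_event (i : Fin d) (v : (Fin d → SL 2 p) → Fin 2 → ZMod p) (hv : ∀ S, v S ≠ 0)
    (hinv : ∀ S t, v (S * Pi.mulSingle i (Vel t)) = v S) :
    p * (univ.filter (fun S : Fin d → SL 2 p => om (mvec S i) (v S) = 0)).card ≤ 
      1 * Fintype.card (Fin d → SL 2 p) := by
  have := avg_aux (univ.filter (fun S : Fin d → SL 2 p => om (mvec S i) (v S) = 0))
    (fun t : ZMod p => Pi.mulSingle i (Vel t)) 1 (by
      intro S
      rw [card_le_one]
      intro s hs t ht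
      simp only [mem_filter, mem_univ, true_and, hinv] at hs ht
      by_contra hst
      apply hv S
      have hm : ∀ t, mvec (S * Pi.mulSingle i (Vel t)) i = (S i).1 *ᵥ (ell p i + t • ![0, 1]) := by
        intro t
        simp only [mvec, Pi.mul_apply, Pi.mulSingle_eq_same, Matrix.SpecialLinearGroup.coe_mul]
        rw [← Matrix.mulVec_mulVec]
        congr 1
        ext k
        fin_cases k <;> simp [Vel, ell, Matrix.mulVec, dotProduct, Fin.sum_univ_two, add_comm]
      rw [hm] at hs ht
      set w := ((S i)⁻¹).1 *ᵥ v S with hw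
      have hvw : v S = (S i).1 *ᵥ w := by
        rw [hw, Matrix.mulVec_mulVec, ← Matrix.SpecialLinearGroup.coe_mul, mul_inv_cancel,
          Matrix.SpecialLinearGroup.coe_one, Matrix.one_mulVec]
      rw [hvw, om_SL] at hs ht
      simp [om, ell] at hs ht
      have h0 : w 0 = 0 := by
        have : (s - t) * w 0 = 0 := by linear_combination ht - hs
        rcases mul_eq_zero.1 this with h | h
        · exact absurd (sub_eq_zero.1 h) hst
        · exact h
      have h1 : w 1 = 0 := by
        rw [h0] at hs; simpa using hs
      have : w = 0 := by ext k; fin_cases k <;> simp [h0, h1]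
      rw [hvw, this, Matrix.mulVec_zero])
  rwa [ZMod.card] at this

lemma ell_ne_zero (i : Fin d) : ell p i ≠ 0 := by
  intro h
  have := congrFun h 0
  simp [ell] at this

lemma mvec_ne_zero (S : Fin d → SL 2 p) (i : Fin d) : mvec S i ≠ 0 := by
  intro h
  have h2 := om_SL (S i) (ell p i) ![0, 1]
  have h3 : (S i).1 *ᵥ ell p i = 0 := h
  rw [h3] at h2
  simp [om, ell] at h2

open Classical in
lemma bad_prob :
    p * (univ.filter (fun S : Fin d → SL 2 p => ¬ GoodT S)).card ≤ 
      (2 * d ^ 2) * Fintype.card (Fin d → SL 2 p) := by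
  have hsub : univ.filter (fun S : Fin d → SL 2 p => ¬ GoodT S) ⊆
      (univ : Finset (Fin d × Fin d)).biUnion (fun ij =>
        univ.filter (fun S : Fin d → SL 2 p => om (mvec S ij.1) (ell p ij.2) = 0) ∪ 
        univ.filter (fun S : Fin d → SL 2 p => ij.1 ≠ ij.2 ∧ om (mvec S ij.1) (mvec S ij.2) = 0)) := by
    intro S hS
    rw [mem_filter] at hS
    replace hS := hS.2
    simp only [mem_biUnion, mem_union, mem_filter, mem_univ, true_and]
    by_contra hcon
    push Not at hcon
    exact hS ⟨fun i j => (hcon (i, j)).1, fun i j h => (hcon (i, j)).2 h⟩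
  have hb : ∀ ij : Fin d × Fin d, p * (univ.filter (fun S : Fin d → SL 2 p => om (mvec S ij.1) (ell p ij.2) = 0) ∪ 
        univ.filter (fun S : Fin d → SL 2 p => ij.1 ≠ ij.2 ∧ om (mvec S ij.1) (mvec S ij.2) = 0)).card ≤ 2 * Fintype.card (Fin d → SL 2 p) := by
    rintro ⟨i, j⟩
    have h1 := bad_event (p := p) i (fun _ => ell p j) (fun _ => ell_ne_zero j) (fun _ _ => rfl)
    have h2 : p * (univ.filter (fun S : Fin d → SL 2 p => i ≠ j ∧ om (mvec S i) (mvec S j) = 0)).card ≤ 1 * Fintype.card (Fin d → SL 2 p) := by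
      by_cases hij : i = j
      · simp [hij]
      · have := bad_event (p := p) i (fun S => mvec S j) (fun S => mvec_ne_zero S j) (by
          intro S t
          simp [mvec, Pi.mulSingle_eq_of_ne (Ne.symm hij)])
        simpa [hij] using this
    refine le_trans (Nat.mul_le_mul_left _ (card_union_le _ _)) ?_
    rw [mul_add]
    linarith
  calc _ ≤ p * ∑ ij : Fin d × Fin d, _ := Nat.mul_le_mul_left _ ((card_le_card hsub).trans card_biUnion_le)
    _ ≤ ∑ ij : Fin d × Fin d, 2 * Fintype.card (Fin d → SL 2 p) := by
      rw [mul_sum]; exact sum_le_sum fun ij _ => hb ij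
    _ = _ := by simp; ring

/-- Reduced words of length `n`. -/
def redW (d : ℕ) : ℕ → Finset (List (Fin d × Bool))
  | 0 => {[]}
  | n + 1 => (redW d n).biUnion fun l =>
      (univ.filter (fun a : Fin d × Bool => ∀ b ∈ l.head?, a.1 = b.1 → a.2 = b.2)).image (· :: l)

lemma mem_redW (l : List (Fin d × Bool)) : l ∈ redW d l.length ↔ FreeGroup.IsReduced l := by
  induction l with
  | nil => simp [redW]
  | cons a l ih =>
    rw [FreeGroup.IsReduced, List.isChain_cons]
    simp only [List.length_cons, redW, mem_biUnion, mem_image, mem_filter, mem_univ, true_and,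
      List.cons.injEq]
    constructor
    · rintro ⟨l', h1, a', h2, rfl, rfl⟩
      exact ⟨h2, ih.1 h1⟩
    · rintro ⟨h2, h1⟩
      exact ⟨l, ih.2 h1, a, h2, rfl, rfl⟩

lemma length_redW (n : ℕ) (l : List (Fin d × Bool)) (h : l ∈ redW d n) : l.length = n := by
  induction n generalizing l with
  | zero => simpa [redW] using h
  | succ n ih =>
    simp only [redW, mem_biUnion, mem_image] at h
    obtain ⟨l', h1, a', h2, rfl⟩ := h
    simp [ih l' h1]

lemma card_redW_succ (n : ℕ) : (redW d (n + 1)).card ≤ 2 * d * (2 * d - 1) ^ n := by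
  induction n with
  | zero =>
    refine card_biUnion_le.trans ?_
    simp only [redW, sum_singleton, pow_zero, mul_one]
    refine card_image_le.trans ((card_le_univ _).trans ?_)
    simp [mul_comm]
  | succ n ih =>
    rw [redW]
    refine card_biUnion_le.trans ?_
    calc _ ≤ ∑ l ∈ redW d (n + 1), (2 * d - 1) := by
          apply sum_le_sum
          intro l hl
          have hlen := length_redW _ _ hl
          refine card_image_le.trans ?_
          obtain ⟨b, l, rfl⟩ := List.exists_cons_of_length_pos (l := l) (by omega)
          have : univ.filter (fun a : Fin d × Bool => ∀ c ∈ (b :: l).head?, a.1 = c.1 → a.2 = c.2) ⊆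
            univ.erase (b.1, !b.2) := by
            intro a ha
            simp only [mem_filter, mem_univ, true_and, List.head?_cons, Option.mem_def,
              Option.some.injEq] at ha
            have := ha b rfl
            rw [mem_erase]
            refine ⟨?_, mem_univ _⟩
            rintro rfl
            simp at this
          refine (card_le_card this).trans ?_
          rw [card_erase_of_mem (mem_univ _)]
          simp [mul_comm]
      _ = (redW d (n + 1)).card * (2 * d - 1) := by simp
      _ ≤ 2 * d * (2 * d - 1) ^ n * (2 * d - 1) := Nat.mul_le_mul_right _ ih
      _ = _ := by ring

lemma card_redW (hd : 2 ≤ d) (n : ℕ) : (redW d n).card ≤ 2 * (2 * d - 1) ^ n := by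
  cases n with
  | zero => simp [redW]
  | succ n =>
    refine (card_redW_succ n).trans ?_
    rw [pow_succ']
    rw [← mul_assoc]
    exact Nat.mul_le_mul_right _ (by omega)

lemma wordProd_eq {d m : ℕ} (w : Fin m → Fin d × Bool) : wordProd w = FreeGroup.mk (List.ofFn w) := by
  rw [wordProd, ← FreeGroup.lift_of_apply (FreeGroup.mk (List.ofFn w)), FreeGroup.lift_mk,
    List.map_ofFn]
  congr 2
  ext j
  by_cases h : (w j).2 <;> simp [h]

lemma wordEval_eq {G : Type*} [Group G] {d m : ℕ} (S : Fin d → G) (w : Fin m → Fin d × Bool) :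
    wordEval S w = FreeGroup.lift S (wordProd w) := by
  rw [wordProd, wordEval, map_list_prod, List.map_ofFn]
  congr 2
  ext j
  by_cases h : (w j).2 <;> simp [h]

end
section
open Finset

open Classical in
lemma union_prob {p d : ℕ} [Fact p.Prime] (hd : 2 ≤ d) (hdp : d ≤ p) (L : ℕ) :
    p * (univ.filter (fun S : Fin d → SL 2 p => ∃ m : ℕ, m ≤ L ∧
      ∃ w : Fin m → Fin d × Bool, wordProd w ≠ 1 ∧ (wordEval S w = 1 ∨
        (↑(wordEval S w) : Matrix (Fin 2) (Fin 2) (ZMod p)) = -1))).card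
      ≤ (2 * d ^ 2 + 4 * (L + 1) ^ 2 * (2 * d - 1) ^ L) * Fintype.card (Fin d → SL 2 p) := by
  set N := Fintype.card (Fin d → SL 2 p)
  let E : List (Fin d × Bool) → Finset (Fin d → SL 2 p) := fun l =>
    if l = [] then ∅ else univ.filter (fun S : Fin d → SL 2 p => GoodT S ∧
      (FreeGroup.lift S (FreeGroup.mk l) = 1 ∨
        ((FreeGroup.lift S (FreeGroup.mk l) : SL 2 p) : Matrix (Fin 2) (Fin 2) (ZMod p)) = -1))
  have hE : ∀ n, n ≤ L → ∀ l ∈ redW d n, p * (E l).card ≤ 2 * L * N := by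
    intro n hn l hl
    have hlen := length_redW n l hl
    by_cases h : l = []
    · simp [E, h]
    · simp only [E, if_neg h]
      refine (word_prob hdp l ((mem_redW l).1 (by rwa [hlen])) h).trans ?_
      exact Nat.mul_le_mul_right _ (by omega)
  have hsub : univ.filter (fun S : Fin d → SL 2 p => ∃ m : ℕ, m ≤ L ∧
      ∃ w : Fin m → Fin d × Bool, wordProd w ≠ 1 ∧ (wordEval S w = 1 ∨
        (↑(wordEval S w) : Matrix (Fin 2) (Fin 2) (ZMod p)) = -1)) ⊆
      univ.filter (fun S : Fin d → SL 2 p => ¬ GoodT S) ∪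
        (range (L + 1)).biUnion fun n => (redW d n).biUnion E := by
    intro S hS
    rw [mem_filter] at hS
    obtain ⟨-, m, hm, w, hw, hS⟩ := hS
    rw [mem_union]
    by_cases hg : GoodT S
    · right
      rw [wordEval_eq] at hS
      have hne : (wordProd w).toWord ≠ [] := by
        rwa [Ne, FreeGroup.toWord_eq_nil_iff]
      have hlen : (wordProd w).toWord.length ≤ m := by
        have := FreeGroup.norm_mk_le (L₁ := List.ofFn w)
        rw [← wordProd_eq, List.length_ofFn] at this
        exact this
      rw [mem_biUnion]
      refine ⟨(wordProd w).toWord.length, mem_range.2 (by omega), ?_⟩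
      rw [mem_biUnion]
      refine ⟨(wordProd w).toWord, (mem_redW _).2 FreeGroup.isReduced_toWord, ?_⟩
      simp only [E, if_neg hne]
      rw [mem_filter, FreeGroup.mk_toWord]
      exact ⟨mem_univ _, hg, hS⟩
    · left
      rw [mem_filter]
      exact ⟨mem_univ _, hg⟩
  have hq : 1 ≤ 2 * d - 1 := by omega
  have hsum : p * ((range (L + 1)).biUnion fun n => (redW d n).biUnion E).card ≤
      (L + 1) * (2 * (2 * d - 1) ^ L * (2 * L * N)) := by
    calc _ ≤ p * ∑ n ∈ range (L + 1), ∑ l ∈ redW d n, (E l).card :=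
          Nat.mul_le_mul_left _ (card_biUnion_le.trans (sum_le_sum fun n _ => card_biUnion_le))
      _ = ∑ n ∈ range (L + 1), ∑ l ∈ redW d n, p * (E l).card := by simp_rw [mul_sum]
      _ ≤ ∑ n ∈ range (L + 1), 2 * (2 * d - 1) ^ L * (2 * L * N) := by
          apply sum_le_sum
          intro n hn
          have hn : n ≤ L := by have := mem_range.1 hn; omega
          calc _ ≤ ∑ l ∈ redW d n, 2 * L * N := sum_le_sum fun l hl => hE n hn l hl
            _ = (redW d n).card * (2 * L * N) := by simp
            _ ≤ _ := Nat.mul_le_mul_right _ ((card_redW hd n).trans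
              (Nat.mul_le_mul_left _ (Nat.pow_le_pow_right hq hn)))
      _ = _ := by simp
  have hbad := bad_prob (p := p) (d := d)
  calc _ ≤ p * (_ + _) := Nat.mul_le_mul_left _ ((card_le_card hsub).trans (card_union_le _ _))
    _ ≤ 2 * d ^ 2 * N + (L + 1) * (2 * (2 * d - 1) ^ L * (2 * L * N)) := by
      rw [mul_add]; exact add_le_add hbad hsum
    _ ≤ 2 * d ^ 2 * N + (L + 1) * (2 * (2 * d - 1) ^ L * (2 * (L + 1) * N)) := by
      gcongr; omega
    _ = _ := by ring

end

/-- Fix d ≥ 2. There exists C > 0 such that for every prime p, the proportion of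
tuples S ∈ SL₂(ℤ/pℤ)^d for which some nontrivial word of length at most (1/2)·log_{2d−1}(p)
evaluates at S to id or −id is at most C·p^{−1/4}. -/
theorem stmt5 (d : ℕ) (hd : 2 ≤ d) :
    ∃ C : ℝ, 0 < C ∧
      ∀ (p : ℕ), p.Prime →
        (Nat.card {S : Fin d → SL 2 p //
            ∃ m : ℕ, (m : ℝ) ≤ (1/2) * Real.logb (2 * d - 1) p ∧
              ∃ w : Fin m → Fin d × Bool, wordProd w ≠ 1 ∧
                (wordEval S w = 1 ∨
                  (↑(wordEval S w) : Matrix (Fin 2) (Fin 2) (ZMod p)) = -1)} : ℝ) /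
          (Nat.card (Fin d → SL 2 p) : ℝ) ≤ C * (p : ℝ) ^ (-(1/4 : ℝ)) := by
  classical
  refine ⟨2 * (d : ℝ) ^ 2 + 64, by positivity, ?_⟩
  intro p hp
  haveI : Fact p.Prime := ⟨hp⟩
  have hd' : (2 : ℝ) ≤ d := by exact_mod_cast hd
  have hp1 : (1 : ℝ) ≤ p := by exact_mod_cast hp.one_le
  have hp0 : (0 : ℝ) < p := by linarith
  set y : ℝ := (p : ℝ) ^ (1 / 4 : ℝ) with hy
  have hy4 : y ^ 4 = p := by
    rw [hy, ← Real.rpow_natCast, ← Real.rpow_mul hp0.le]; norm_num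
  have hy1 : 1 ≤ y := Real.one_le_rpow hp1 (by norm_num)
  have hy0 : 0 < y := by linarith
  rw [Real.rpow_neg hp0.le, ← hy]
  have hN : (0 : ℝ) < (Nat.card (Fin d → SL 2 p) : ℝ) := by
    exact_mod_cast Nat.card_pos
  rw [div_le_iff₀ hN]
  by_cases hdp : d ≤ p
  · set L := ⌊(1 / 2) * Real.logb (2 * d - 1) p⌋₊ with hL
    have hb1 : (1 : ℝ) < 2 * d - 1 := by linarith
    have hlog0 : 0 ≤ (1 / 2) * Real.logb (2 * d - 1) p :=
      mul_nonneg (by norm_num) (Real.logb_nonneg hb1 hp1)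
    have hLle : (L : ℝ) ≤ (1 / 2) * Real.logb (2 * d - 1) p := Nat.floor_le hlog0
    have hqp : (2 * (d : ℝ) - 1) ^ (2 * L) ≤ p := by
      rw [← Real.rpow_natCast, ← Real.le_logb_iff_rpow_le hb1 hp0]
      push_cast
      linarith
    have hun := union_prob (p := p) hd hdp L
    rw [← Nat.card_eq_fintype_card] at hun
    have hcard : Nat.card {S : Fin d → SL 2 p //
            ∃ m : ℕ, (m : ℝ) ≤ (1/2) * Real.logb (2 * d - 1) p ∧
              ∃ w : Fin m → Fin d × Bool, wordProd w ≠ 1 ∧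
                (wordEval S w = 1 ∨
                  (↑(wordEval S w) : Matrix (Fin 2) (Fin 2) (ZMod p)) = -1)} =
        (Finset.univ.filter (fun S : Fin d → SL 2 p => ∃ m : ℕ, m ≤ L ∧
      ∃ w : Fin m → Fin d × Bool, wordProd w ≠ 1 ∧ (wordEval S w = 1 ∨
        (↑(wordEval S w) : Matrix (Fin 2) (Fin 2) (ZMod p)) = -1))).card := by
      rw [Nat.card_eq_fintype_card, Fintype.card_subtype]
      simp only [hL, Nat.le_floor_iff hlog0]
    rw [← hcard] at hun
    generalize Nat.card {S : Fin d → SL 2 p //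
            ∃ m : ℕ, (m : ℝ) ≤ (1/2) * Real.logb (2 * d - 1) p ∧
              ∃ w : Fin m → Fin d × Bool, wordProd w ≠ 1 ∧
                (wordEval S w = 1 ∨
                  (↑(wordEval S w) : Matrix (Fin 2) (Fin 2) (ZMod p)) = -1)} = B at hun ⊢
    generalize Nat.card (Fin d → SL 2 p) = N at hun hN ⊢
    have hunR : (p : ℝ) * B ≤ (2 * (d : ℝ) ^ 2 + 4 * ((L : ℝ) + 1) ^ 2 * (2 * (d : ℝ) - 1) ^ L) * N := by
      have h : ((p * B : ℕ) : ℝ) ≤ _ := Nat.cast_le.2 hun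
      push_cast [Nat.cast_sub (show 1 ≤ 2 * d by omega)] at h
      exact h
    have hqy : (2 * (d : ℝ) - 1) ^ L ≤ y ^ 2 := by
      have h0 : 0 ≤ (2 * (d : ℝ) - 1) ^ L := by positivity
      refine le_of_sq_le_sq ?_ (by positivity)
      rw [← pow_mul, ← pow_mul, hy4, mul_comm L 2]
      exact hqp
    have h54 : ((5 / 4 : ℝ) ^ L) ^ 2 ≤ y := by
      refine le_of_pow_le_pow_left₀ (n := 4) (by norm_num) hy0.le ?_
      rw [hy4]
      refine le_trans ?_ hqp
      rw [← pow_mul, ← pow_mul, show L * (2 * 4) = 4 * (2 * L) by ring, pow_mul]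
      gcongr
      norm_num
      linarith
    have hbern : ((L : ℝ) + 1) ≤ 4 * (5 / 4 : ℝ) ^ L := by
      have := one_add_mul_le_pow (a := (1 / 4 : ℝ)) (by norm_num) L
      norm_num at this
      linarith
    have hLy : ((L : ℝ) + 1) ^ 2 ≤ 16 * y := by
      calc ((L : ℝ) + 1) ^ 2 ≤ (4 * (5 / 4 : ℝ) ^ L) ^ 2 := by gcongr
        _ = 16 * ((5 / 4 : ℝ) ^ L) ^ 2 := by ring
        _ ≤ _ := by linarith
    have hmain : 2 * (d : ℝ) ^ 2 + 4 * ((L : ℝ) + 1) ^ 2 * (2 * (d : ℝ) - 1) ^ L ≤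
        (2 * (d : ℝ) ^ 2 + 64) * y ^ 3 := by
      have h1 : 4 * ((L : ℝ) + 1) ^ 2 * (2 * (d : ℝ) - 1) ^ L ≤ 4 * (16 * y) * y ^ 2 := by
        gcongr
      have h2 : 1 ≤ y ^ 3 := one_le_pow₀ hy1
      nlinarith [sq_nonneg (d : ℝ)]
    have h3 : (p : ℝ) * B ≤ p * ((2 * (d : ℝ) ^ 2 + 64) * y⁻¹ * N) := by
      calc _ ≤ _ := hunR
        _ ≤ (2 * (d : ℝ) ^ 2 + 64) * y ^ 3 * N := by gcongr
        _ = _ := by rw [← hy4]; field_simp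
    exact le_of_mul_le_mul_left h3 hp0
  · have hle : (Nat.card {S : Fin d → SL 2 p //
            ∃ m : ℕ, (m : ℝ) ≤ (1/2) * Real.logb (2 * d - 1) p ∧
              ∃ w : Fin m → Fin d × Bool, wordProd w ≠ 1 ∧
                (wordEval S w = 1 ∨
                  (↑(wordEval S w) : Matrix (Fin 2) (Fin 2) (ZMod p)) = -1)} : ℝ) ≤
        Nat.card (Fin d → SL 2 p) := by
      exact_mod_cast Nat.card_le_card_of_injective _ Subtype.val_injective
    refine hle.trans (le_mul_of_one_le_left hN.le ?_)
    rw [← div_eq_mul_inv, le_div_iff₀ hy0, one_mul]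
    have h1 : y ≤ y ^ 4 := le_self_pow₀ hy1 (by norm_num)
    have h2 : (p : ℝ) ≤ d := by exact_mod_cast (not_le.1 hdp).le
    nlinarith
end

section
/- For every integer d ≥ 1 and every integer m ≥ 0, the m-th moment ∫ x^m f_{2d}(x) dx of the Kesten–McKay law with parameter 2d equals N(d, m), the number of trivial words of length m in d letters. -/
open MeasureTheory

namespace KM

/-- Normalised spherical functions of the `(q+1)`-regular tree. -/
noncomputable def Q (q : ℝ) : ℕ → ℝ → ℝ
  | 0, _ => 1
  | 1, x => x / (q + 1)
  | (n + 2), x => (x * Q q (n + 1) x - Q q n x) / q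

lemma Q_cont (q : ℝ) (n : ℕ) : Continuous (Q q n) := by
  induction n using Nat.strong_induction_on with
  | _ n ih =>
    match n, ih with
    | 0, _ => simpa [Q] using (continuous_const : Continuous fun _ : ℝ => (1 : ℝ))
    | 1, _ =>
      have : Q q 1 = fun x => x / (q + 1) := by funext x; simp [Q]
      rw [this]; fun_prop
    | n + 2, ih =>
      have : Q q (n + 2) = fun x => (x * Q q (n + 1) x - Q q n x) / q := by
        funext x; simp [Q]
      rw [this]
      have h1 := ih (n + 1) (by omega)
      have h2 := ih n (by omega)
      fun_prop

lemma Q_trig (q : ℝ) (hq : 1 ≤ q) (n : ℕ) (θ : ℝ) :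
    Q q n (2 * √q * Real.cos θ) * Real.sin θ * (q + 1) * √q ^ n =
      q * Real.sin ((n + 1) * θ) - Real.sin ((n - 1) * θ) := by
  have hr : √q ^ 2 = q := Real.sq_sqrt (by linarith)
  induction n using Nat.strong_induction_on with
  | _ n ih =>
    match n, ih with
    | 0, _ => simp [Q]; ring
    | 1, _ =>
      have h2 : Real.sin ((1 + 1) * θ) = 2 * Real.sin θ * Real.cos θ := by
        rw [← Real.sin_two_mul]; ring_nf
      have : q + 1 ≠ 0 := by linarith
      simp only [Q, Nat.cast_one, h2, sub_self, zero_mul, Real.sin_zero, pow_one]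
      field_simp
      linear_combination (2 * Real.cos θ * Real.sin θ) * hr
    | n + 2, ih =>
      have h1 := ih (n + 1) (by omega)
      have h0 := ih n (by omega)
      have hq0 : q ≠ 0 := by linarith
      have e1 : Real.sin (((n + 2 : ℕ) + 1) * θ) =
          2 * Real.cos θ * Real.sin (((n + 1 : ℕ) + 1) * θ) - Real.sin ((n + 1) * θ) := by
        have a : ((n + 2 : ℕ) + 1) * θ = ((n + 1 : ℕ) + 1) * θ + θ := by push_cast; ring
        have b : (n + 1) * θ = ((n + 1 : ℕ) + 1) * θ - θ := by push_cast; ring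
        rw [a, b, Real.sin_add, Real.sin_sub]; ring
      have e2 : Real.sin (((n + 2 : ℕ) - 1) * θ) =
          2 * Real.cos θ * Real.sin (((n + 1 : ℕ) - 1) * θ) - Real.sin ((n - 1) * θ) := by
        have a : ((n + 2 : ℕ) - 1) * θ = ((n + 1 : ℕ) - 1) * θ + θ := by push_cast; ring
        have b : (n - 1) * θ = ((n + 1 : ℕ) - 1) * θ - θ := by push_cast; ring
        rw [a, b, Real.sin_add, Real.sin_sub]; ring
      rw [e1, e2]
      simp only [Q]
      generalize Q q (n + 1) (2 * √q * Real.cos θ) = A at *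
      generalize Q q n (2 * √q * Real.cos θ) = B at *
      have : (2 * √q * Real.cos θ * A - B) / q * Real.sin θ * (q + 1) * √q ^ (n + 2)
          = 2 * Real.cos θ * (A * Real.sin θ * (q + 1) * √q ^ (n + 1)) -
            B * Real.sin θ * (q + 1) * √q ^ n := by
        rw [pow_succ, pow_succ]
        field_simp
        linear_combination (Real.sin θ * (2 * √q * Real.cos θ * A - B)) * hr
      rw [this, h1, h0]; ring

/-! ### The word count -/

/-- The group element of a letter. -/
def letter {d : ℕ} (s : Fin d × Bool) : FreeGroup (Fin d) :=
  if s.2 then FreeGroup.of s.1 else (FreeGroup.of s.1)⁻¹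

lemma letter_inv {d : ℕ} (s : Fin d × Bool) : (letter s)⁻¹ = FreeGroup.mk [(s.1, !s.2)] := by
  rcases s with ⟨a, b⟩
  cases b <;> simp [letter, FreeGroup.of, FreeGroup.inv_mk, FreeGroup.invRev]

lemma norm_letter_mul {d : ℕ} (s : Fin d × Bool) (g : FreeGroup (Fin d)) :
    ((letter s)⁻¹ * g).norm =
      match g.toWord with
      | [] => 1
      | y :: tl => if s = y then tl.length else tl.length + 2 := by
  have h : (letter s)⁻¹ * g = FreeGroup.mk ((s.1, !s.2) :: g.toWord) := by
    rw [letter_inv]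
    conv_lhs => rw [← FreeGroup.mk_toWord (x := g)]
    rw [FreeGroup.mul_mk]; rfl
  rw [h, FreeGroup.norm, FreeGroup.toWord_mk, FreeGroup.reduce.cons, FreeGroup.reduce_toWord]
  rcases g.toWord with _ | ⟨y, tl⟩
  · rfl
  · rcases s with ⟨a, b⟩
    rcases y with ⟨a', b'⟩
    simp only [Prod.mk.injEq]
    by_cases h : a = a' ∧ b = b' <;> simp [h]

lemma sum_Q {d : ℕ} (hd : 1 ≤ d) (g : FreeGroup (Fin d)) (x : ℝ) :
    ∑ s : Fin d × Bool, Q (2 * d - 1) ((letter s)⁻¹ * g).norm x =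
      x * Q (2 * d - 1) g.norm x := by
  have hd' : (1 : ℝ) ≤ d := by exact_mod_cast hd
  have hn : g.norm = g.toWord.length := rfl
  simp only [norm_letter_mul, hn]
  rcases g.toWord with _ | ⟨y, tl⟩
  · simp [Q]
    field_simp
  · simp only [List.length_cons]
    have : ∀ s : Fin d × Bool,
        Q (2 * d - 1) (if s = y then tl.length else tl.length + 2) x =
        Q (2 * d - 1) (tl.length + 2) x + if s = y then
          (Q (2 * d - 1) tl.length x - Q (2 * d - 1) (tl.length + 2) x) else 0 := by
      intro s; split_ifs <;> ring
    simp only [this]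
    rw [Finset.sum_add_distrib]
    simp [Q]
    have : (2 * (d : ℝ) - 1) ≠ 0 := by linarith
    generalize Q (2 * d - 1) (tl.length + 1) x = A
    generalize Q (2 * d - 1) tl.length x = B
    generalize hc : 2 * (d : ℝ) - 1 = c at *
    have hc' : (d : ℝ) = (c + 1) / 2 := by linarith
    rw [hc']
    field_simp
    ring

/-- Number of words of length `m` with product `g`. -/
noncomputable def W (d m : ℕ) (g : FreeGroup (Fin d)) : ℕ :=
  Nat.card {w : Fin m → Fin d × Bool // wordProd w = g}

lemma wordProd_cons {d m : ℕ} (s : Fin d × Bool) (w : Fin m → Fin d × Bool) :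
    wordProd (Fin.cons s w : Fin (m + 1) → Fin d × Bool) = letter s * wordProd w := by
  simp [wordProd, letter, List.ofFn_succ]

lemma W_succ (d m : ℕ) (g : FreeGroup (Fin d)) :
    W d (m + 1) g = ∑ s : Fin d × Bool, W d m ((letter s)⁻¹ * g) := by
  unfold W
  rw [← Nat.card_sigma]
  apply Nat.card_congr
  refine Equiv.trans ?_ (Equiv.subtypeProdEquivSigmaSubtype
    (fun (s : Fin d × Bool) (w : Fin m → Fin d × Bool) => wordProd w = (letter s)⁻¹ * g))
  refine ((Fin.consEquiv (fun _ : Fin (m + 1) => Fin d × Bool)).subtypeEquiv ?_).symm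
  rintro ⟨s, w⟩
  have := wordProd_cons s w
  simp only [Fin.consEquiv, Equiv.coe_fn_mk]
  rw [this, eq_inv_mul_iff_mul_eq]

lemma W_zero (d : ℕ) (g : FreeGroup (Fin d)) : (W d 0 g : ℝ) = if g.norm = 0 then 1 else 0 := by
  unfold W
  have : ∀ w : Fin 0 → Fin d × Bool, wordProd w = g ↔ g.norm = 0 := by
    intro w
    rw [FreeGroup.norm_eq_zero]
    simp only [wordProd, List.ofFn_zero, List.prod_nil]
    exact eq_comm
  simp only [this]
  by_cases h : g.norm = 0 <;> simp [h]

/-! ### The integrals -/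

/-- The denominator in angular coordinates. -/
noncomputable def D (q θ : ℝ) : ℝ := (q + 1) ^ 2 - 4 * q * Real.cos θ ^ 2

lemma D_eq (q θ : ℝ) : D q θ = (q - 1) ^ 2 + 4 * q * Real.sin θ ^ 2 := by
  unfold D; linear_combination (-4) * q * Real.sin_sq_add_cos_sq θ

lemma D_pos {q θ : ℝ} (hq : 1 ≤ q) (h : θ ∈ Set.Ioo 0 Real.pi) : 0 < D q θ := by
  have := Real.sin_pos_of_mem_Ioo h
  rw [D_eq]; positivity

lemma D_cont (q : ℝ) : Continuous (D q) := by unfold D; fun_prop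

/-- The weight in angular coordinates. -/
noncomputable def wt (q θ : ℝ) : ℝ := 2 * q * (q + 1) * Real.sin θ ^ 2 / (Real.pi * D q θ)

lemma wt_int {q : ℝ} (hq : 1 ≤ q) {f : ℝ → ℝ} (hf : Continuous f) :
    IntegrableOn (fun θ => f θ * wt q θ) (Set.Ioo 0 Real.pi) := by
  have hfi : IntegrableOn f (Set.Ioo 0 Real.pi) :=
    (hf.integrableOn_Icc (a := 0) (b := Real.pi)).mono_set Set.Ioo_subset_Icc_self
  refine Integrable.mul_bdd (c := (q + 1) / (2 * Real.pi)) hfi ?_ ?_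
  · have := (D_cont q).measurable
    unfold wt
    exact Measurable.aestronglyMeasurable (by fun_prop)
  · filter_upwards [ae_restrict_mem measurableSet_Ioo] with θ hθ
    have hD := D_pos hq hθ
    have hp := Real.pi_pos
    have : 0 ≤ wt q θ := by unfold wt; positivity
    rw [Real.norm_of_nonneg this]
    unfold wt
    rw [div_le_div_iff₀ (by positivity) (by positivity), D_eq]
    have : 0 ≤ (q + 1) * Real.pi * (q - 1) ^ 2 := by positivity
    nlinarith

/-- The basic integrals. -/
noncomputable def F (q : ℝ) (n : ℕ) : ℝ :=
  ∫ θ in Set.Ioo 0 Real.pi,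
    Real.sin θ * (q * Real.sin ((n + 1) * θ) - Real.sin ((n - 1) * θ)) / D q θ

lemma int_cos (n : ℕ) : ∫ θ in Set.Ioo 0 Real.pi, Real.cos (n * θ) = if n = 0 then Real.pi else 0 := by
  rw [← integral_Ioc_eq_integral_Ioo, ← intervalIntegral.integral_of_le Real.pi_pos.le]
  split_ifs with h
  · simp [h]
  · have : (n : ℝ) ≠ 0 := by exact_mod_cast h
    rw [intervalIntegral.integral_comp_mul_left (fun x => Real.cos x) this]
    simp [Real.sin_nat_mul_pi]

lemma cos_intOn (n : ℕ) : IntegrableOn (fun θ => Real.cos (n * θ)) (Set.Ioo 0 Real.pi) :=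
  ((by fun_prop : Continuous fun θ : ℝ => Real.cos (n * θ)).integrableOn_Icc
    (a := 0) (b := Real.pi)).mono_set Set.Ioo_subset_Icc_self

lemma int_sin_sin (n : ℕ) :
    ∫ θ in Set.Ioo 0 Real.pi, Real.sin θ * Real.sin ((n + 1) * θ) =
      if n = 0 then Real.pi / 2 else 0 := by
  have : ∀ θ : ℝ, Real.sin θ * Real.sin ((n + 1) * θ) =
      (Real.cos ((n : ℕ) * θ) - Real.cos ((n + 2 : ℕ) * θ)) / 2 := by
    intro θ
    have a : (n : ℕ) * θ = (n + 1) * θ - θ := by ring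
    have b : (n + 2 : ℕ) * θ = (n + 1) * θ + θ := by push_cast; ring
    rw [a, b, Real.cos_add, Real.cos_sub]; ring
  simp only [this]
  rw [integral_div, integral_sub (cos_intOn n) (cos_intOn (n + 2)), int_cos, int_cos]
  by_cases h : n = 0 <;> simp [h]

lemma F_one (n : ℕ) : F 1 n = if n = 0 then Real.pi / 2 else 0 := by
  unfold F
  have : Set.EqOn (fun θ => Real.sin θ * (1 * Real.sin ((n + 1) * θ) - Real.sin ((n - 1) * θ)) / D 1 θ)
      (fun θ => Real.cos (n * θ) / 2) (Set.Ioo 0 Real.pi) := by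
    intro θ hθ
    have hs := Real.sin_pos_of_mem_Ioo hθ
    have a : (n + 1) * θ = n * θ + θ := by ring
    have b : (n - 1) * θ = n * θ - θ := by ring
    simp only [D_eq, a, b, Real.sin_add, Real.sin_sub]
    field_simp
    ring
  rw [setIntegral_congr_fun measurableSet_Ioo this, integral_div, int_cos]
  split_ifs <;> simp

lemma F_intOn {q : ℝ} (hq : 1 < q) (n : ℕ) : IntegrableOn (fun θ =>
    Real.sin θ * (q * Real.sin ((n + 1) * θ) - Real.sin ((n - 1) * θ)) / D q θ)
    (Set.Ioo 0 Real.pi) := by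
  have hD : ∀ θ, D q θ ≠ 0 := by
    intro θ
    have : 0 < (q - 1) ^ 2 := by have : 0 < q - 1 := by linarith
                                 positivity
    rw [D_eq]; positivity
  have := D_cont q
  have : Continuous (fun θ : ℝ =>
    Real.sin θ * (q * Real.sin ((n + 1) * θ) - Real.sin ((n - 1) * θ)) / D q θ) := by
    fun_prop (disch := exact hD _)
  exact (this.integrableOn_Icc (a := 0) (b := Real.pi)).mono_set Set.Ioo_subset_Icc_self

lemma F_rec {q : ℝ} (hq : 1 < q) (n : ℕ) :
    F q (n + 2) = q * F q n - if n = 0 then Real.pi / 2 else 0 := by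
  unfold F
  rw [← int_sin_sin, ← integral_const_mul, ← integral_sub ((F_intOn hq n).const_mul q)]
  · apply setIntegral_congr_fun measurableSet_Ioo
    intro θ hθ
    have hD := (D_pos hq.le hθ).ne'
    have a : ((n + 2 : ℕ) + 1) * θ = (n + 1) * θ + 2 * θ := by push_cast; ring
    have b : ((n + 2 : ℕ) - 1) * θ = (n + 1) * θ := by push_cast; ring
    have c : (n - 1) * θ = (n + 1) * θ - 2 * θ := by ring
    simp only [a, b, c, Real.sin_add ((n + 1) * θ), Real.sin_sub ((n + 1) * θ)]
    field_simp
    have : D q θ = q ^ 2 + 1 - 2 * q * Real.cos (2 * θ) := by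
      rw [D, Real.cos_two_mul]; ring
    rw [this]; ring
  · exact ((by fun_prop : Continuous fun θ : ℝ => Real.sin θ * Real.sin ((n + 1) * θ)).integrableOn_Icc
      (a := 0) (b := Real.pi)).mono_set Set.Ioo_subset_Icc_self

lemma F_bdd {q : ℝ} (hq : 1 < q) (n : ℕ) : |F q n| ≤ (q + 1) / (q - 1) ^ 2 * Real.pi := by
  have h1 : 0 < q - 1 := by linarith
  have := norm_setIntegral_le_of_norm_le_const (μ := volume) (s := Set.Ioo 0 Real.pi)
    (f := fun θ : ℝ => Real.sin θ * (q * Real.sin ((n + 1) * θ) - Real.sin ((n - 1) * θ)) / D q θ)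
    (C := (q + 1) / (q - 1) ^ 2) (by simp) ?_
  · simpa [F, Real.pi_pos.le] using this
  · intro θ hθ
    have hD := D_pos hq.le hθ
    have hD' : (q - 1) ^ 2 ≤ D q θ := by rw [D_eq]; nlinarith [sq_nonneg (Real.sin θ)]
    rw [Real.norm_eq_abs, abs_div, abs_of_pos hD]
    apply div_le_div₀ (by linarith) _ (by positivity) hD'
    rw [abs_mul]
    have a1 := Real.abs_sin_le_one θ
    have a2 : |q * Real.sin ((n + 1) * θ) - Real.sin ((n - 1) * θ)| ≤ q + 1 := by
      have b1 := Real.neg_one_le_sin ((n + 1) * θ)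
      have b2 := Real.sin_le_one ((n + 1) * θ)
      have b3 := Real.neg_one_le_sin ((n - 1) * θ)
      have b4 := Real.sin_le_one ((n - 1) * θ)
      rw [abs_le]; constructor <;> nlinarith
    calc _ ≤ 1 * (q + 1) := by gcongr
      _ = _ := one_mul _

lemma F_eq {q : ℝ} (hq : 1 ≤ q) (n : ℕ) : F q n = if n = 0 then Real.pi / (2 * q) else 0 := by
  rcases hq.eq_or_lt with rfl | hq
  · simpa using F_one n
  · have pos : ∀ n : ℕ, n ≠ 0 → F q n = 0 := by
      intro n hn
      have hpow : ∀ j : ℕ, F q (n + 2 * j) = q ^ j * F q n := by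
        intro j
        induction j with
        | zero => simp
        | succ j ih =>
          have := F_rec hq (n + 2 * j)
          rw [if_neg (by omega), ih] at this
          rw [show n + 2 * (j + 1) = n + 2 * j + 2 by ring, this]; ring
      by_contra hne
      have hF : 0 < |F q n| := abs_pos.mpr hne
      obtain ⟨j, hj⟩ := pow_unbounded_of_one_lt ((q + 1) / (q - 1) ^ 2 * Real.pi / |F q n|) hq
      have hb := F_bdd hq (n + 2 * j)
      rw [hpow, abs_mul, abs_of_pos (by positivity : 0 < q ^ j)] at hb
      rw [div_lt_iff₀ hF] at hj
      linarith
    split_ifs with h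
    · subst h
      have := F_rec hq 0
      rw [pos _ (by omega)] at this
      simp at this
      field_simp
      linarith
    · exact pos n h

lemma L_Q {q : ℝ} (hq : 1 ≤ q) (n : ℕ) :
    ∫ θ in Set.Ioo 0 Real.pi, Q q n (2 * √q * Real.cos θ) * wt q θ = if n = 0 then 1 else 0 := by
  have hq0 : 0 < q := by linarith
  have hr : 0 < √q := Real.sqrt_pos.mpr hq0
  have : Set.EqOn (fun θ => Q q n (2 * √q * Real.cos θ) * wt q θ) (fun θ => 2 * q / (Real.pi * √q ^ n) *
      (Real.sin θ * (q * Real.sin ((n + 1) * θ) - Real.sin ((n - 1) * θ)) / D q θ))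
      (Set.Ioo 0 Real.pi) := by
    intro θ hθ
    have hD := (D_pos hq hθ).ne'
    simp only [← Q_trig q hq, wt]
    have := Real.pi_pos
    field_simp
  rw [setIntegral_congr_fun measurableSet_Ioo this, integral_const_mul]
  have := F_eq hq n
  unfold F at this
  rw [this]
  have := Real.pi_pos
  split_ifs with h
  · subst h; field_simp
  · simp

lemma L_main {d : ℕ} (hd : 1 ≤ d) (m : ℕ) (g : FreeGroup (Fin d)) :
    ∫ θ in Set.Ioo 0 Real.pi, ((2 * √(2 * d - 1 : ℝ) * Real.cos θ) ^ m *
      Q (2 * d - 1) g.norm (2 * √(2 * d - 1 : ℝ) * Real.cos θ)) * wt (2 * d - 1) θ = W d m g := by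
  have hd' : (1 : ℝ) ≤ d := by exact_mod_cast hd
  have hq : (1 : ℝ) ≤ 2 * d - 1 := by linarith
  induction m generalizing g with
  | zero => simpa [W_zero] using L_Q hq g.norm
  | succ m ih =>
    rw [W_succ]
    push_cast
    simp only [← ih]
    rw [← integral_finsetSum]
    · congr 1
      funext θ
      rw [← Finset.sum_mul, ← Finset.mul_sum, sum_Q hd]
      ring
    · intro s _
      apply wt_int hq
      have := Q_cont (2 * d - 1) ((letter s)⁻¹ * g).norm
      fun_prop

lemma km_meas (d : ℕ) : Measurable (kmDensity d) := by
  unfold kmDensity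
  refine Measurable.ite (measurableSet_le (by fun_prop) (by fun_prop)) (by fun_prop) (by fun_prop)

lemma km_nonneg (d : ℕ) (x : ℝ) : 0 ≤ kmDensity d x := by
  unfold kmDensity
  split_ifs with h
  · have : 0 ≤ (2 * (d : ℝ)) ^ 2 - x ^ 2 := by nlinarith [sq_nonneg (2 * (d : ℝ) - 2)]
    have := Real.pi_pos
    positivity
  · exact le_rfl

lemma image_cos {R : ℝ} (hR : 0 < R) :
    (fun θ => R * Real.cos θ) '' Set.Ioo 0 Real.pi = Set.Ioo (-R) R := by
  ext x
  constructor
  · rintro ⟨θ, hθ, rfl⟩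
    have h1 : Real.cos θ < 1 := by
      have := Real.cos_lt_cos_of_nonneg_of_le_pi le_rfl hθ.2.le hθ.1
      simpa using this
    have h2 : -1 < Real.cos θ := by
      have := Real.cos_lt_cos_of_nonneg_of_le_pi hθ.1.le le_rfl hθ.2
      simpa using this
    constructor <;> simp only <;> nlinarith
  · rintro ⟨h1, h2⟩
    have a : -1 < x / R := by rw [lt_div_iff₀ hR]; linarith
    have b : x / R < 1 := by rw [div_lt_iff₀ hR]; linarith
    refine ⟨Real.arccos (x / R), ⟨Real.arccos_pos.mpr b, ?_⟩, ?_⟩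
    · refine lt_of_le_of_ne (Real.arccos_le_pi _) fun h => ?_
      rw [Real.arccos_eq_pi] at h
      linarith
    · simp only [Real.cos_arccos a.le b.le]
      field_simp

lemma moment {d : ℕ} (hd : 1 ≤ d) (m : ℕ) :
    ∫ x, x ^ m ∂(kestenMcKay d) =
      ∫ θ in Set.Ioo 0 Real.pi, (2 * √(2 * d - 1 : ℝ) * Real.cos θ) ^ m * wt (2 * d - 1) θ := by
  have hd' : (1 : ℝ) ≤ d := by exact_mod_cast hd
  have hq : (1 : ℝ) ≤ 2 * d - 1 := by linarith
  have hr : 0 < √(2 * d - 1 : ℝ) := Real.sqrt_pos.mpr (by linarith)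
  have hr2 : √(2 * d - 1 : ℝ) ^ 2 = 2 * d - 1 := Real.sq_sqrt (by linarith)
  unfold kestenMcKay
  rw [integral_withDensity_eq_integral_toReal_smul (km_meas d).ennreal_ofReal (by simp)]
  simp only [ENNReal.toReal_ofReal (km_nonneg d _), smul_eq_mul]
  rw [← setIntegral_eq_integral_of_forall_compl_eq_zero
    (s := Set.Ioo (-(2 * √(2 * d - 1 : ℝ))) (2 * √(2 * d - 1 : ℝ)))]
  · rw [← image_cos (by positivity), integral_image_eq_integral_abs_deriv_smul measurableSet_Ioo
      (f' := fun θ => 2 * √(2 * d - 1 : ℝ) * (-Real.sin θ))]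
    · apply setIntegral_congr_fun measurableSet_Ioo
      intro θ hθ
      have hs := Real.sin_pos_of_mem_Ioo hθ
      have hD := (D_pos hq hθ).ne'
      have hp := Real.pi_pos
      have e1 : |2 * √(2 * d - 1 : ℝ) * (-Real.sin θ)| = 2 * √(2 * d - 1 : ℝ) * Real.sin θ := by
        rw [mul_neg, abs_neg, abs_of_pos (by positivity)]
      have e2 : 4 * (2 * (d : ℝ) - 1) - (2 * √(2 * d - 1 : ℝ) * Real.cos θ) ^ 2 =
          (2 * √(2 * d - 1 : ℝ) * Real.sin θ) ^ 2 := by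
        have := Real.sin_sq_add_cos_sq θ
        rw [mul_pow, mul_pow, mul_pow, mul_pow, hr2]
        linear_combination (-4 * (2 * (d : ℝ) - 1)) * this
      have e3 : (2 * (d : ℝ)) ^ 2 - (2 * √(2 * d - 1 : ℝ) * Real.cos θ) ^ 2 = D (2 * d - 1) θ := by
        rw [mul_pow (2 * √(2 * d - 1 : ℝ)), mul_pow _ √(2 * d - 1 : ℝ), hr2, D]; ring
      have e4 : kmDensity d (2 * √(2 * d - 1 : ℝ) * Real.cos θ) =
          2 * d * (2 * √(2 * d - 1 : ℝ) * Real.sin θ) / (2 * Real.pi * D (2 * d - 1) θ) := by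
        rw [kmDensity, if_pos, e2, e3, Real.sqrt_sq (by positivity)]
        have : 0 ≤ 4 * (2 * (d : ℝ) - 1) - (2 * √(2 * d - 1 : ℝ) * Real.cos θ) ^ 2 := by
          rw [e2]; positivity
        linarith
      simp only [e1, e4, smul_eq_mul, wt]
      generalize (2 * √(2 * d - 1 : ℝ) * Real.cos θ) ^ m = X
      field_simp
      rw [hr2]; ring
    · intro θ _
      exact ((Real.hasDerivAt_cos θ).const_mul _).hasDerivWithinAt
    · intro a ha b hb h
      exact Real.injOn_cos (Set.Ioo_subset_Icc_self ha) (Set.Ioo_subset_Icc_self hb)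
        (mul_left_cancel₀ (by positivity) h)
  · intro x hx
    have : 4 * (2 * (d : ℝ) - 1) ≤ x ^ 2 := by
      by_contra h
      push Not at h
      apply hx
      have : x ^ 2 < (2 * √(2 * d - 1 : ℝ)) ^ 2 := by rw [mul_pow, hr2]; linarith
      exact abs_lt.mp (abs_lt_of_sq_lt_sq this (by positivity))
    unfold kmDensity
    rw [Real.sqrt_eq_zero_of_nonpos (by linarith)]
    simp

end KM

/-- For every d ≥ 1 and m ≥ 0, the m-th moment of the Kesten–McKay law with
parameter 2d equals N(d, m), the number of trivial words of length m in d letters. -/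
theorem stmt6 (d : ℕ) (hd : 1 ≤ d) (m : ℕ) :
    ∫ x, x ^ m ∂(kestenMcKay d) = (Ntriv d m : ℝ) := by
  have h := KM.L_main hd m 1
  rw [KM.moment hd]
  simpa [KM.Q, KM.W, Ntriv] using h
end

section
/- Fix an integer d ≥ 2. There exist constants α > 0, β > 0 and C > 0, depending only on d, such that for every real p ≥ 2 and every Borel probability measure ν on ℝ supported in [−2d, 2d], if |∫ x^m dν(x) − ∫ x^m f_{2d}(x) dx| ≤ p^{−β} for every integer m with 1 ≤ m ≤ α·log(p), then D(ν, f_{2d}) ≤ C / log(p). -/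
open MeasureTheory

namespace KM
open Polynomial

/-- sum of absolute values of coefficients -/
noncomputable def l1 (p : ℝ[X]) : ℝ := ∑ i ∈ p.support, |p.coeff i|

lemma l1_eq {p : ℝ[X]} {s : Finset ℕ} (h : p.support ⊆ s) : l1 p = ∑ i ∈ s, |p.coeff i| := by
  unfold l1
  apply Finset.sum_subset h
  intro i _ hi
  simp [notMem_support_iff.mp hi]

lemma l1_nonneg (p : ℝ[X]) : 0 ≤ l1 p := Finset.sum_nonneg fun _ _ => abs_nonneg _

lemma l1_zero : l1 0 = 0 := by simp [l1]

lemma l1_add (p q : ℝ[X]) : l1 (p + q) ≤ l1 p + l1 q := by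
  classical
  rw [l1_eq (s := p.support ∪ q.support) support_add,
    l1_eq (p := p) (s := p.support ∪ q.support) Finset.subset_union_left,
    l1_eq (p := q) (s := p.support ∪ q.support) Finset.subset_union_right,
    ← Finset.sum_add_distrib]
  refine Finset.sum_le_sum fun i _ => ?_
  rw [coeff_add]; exact abs_add_le _ _

lemma l1_neg (p : ℝ[X]) : l1 (-p) = l1 p := by simp [l1]

lemma l1_sub (p q : ℝ[X]) : l1 (p - q) ≤ l1 p + l1 q := by
  rw [sub_eq_add_neg, ← l1_neg q]; exact l1_add _ _

lemma l1_sum {ι : Type*} (s : Finset ι) (f : ι → ℝ[X]) : l1 (∑ i ∈ s, f i) ≤ ∑ i ∈ s, l1 (f i) := by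
  classical
  induction s using Finset.induction_on with
  | empty => simp [l1_zero]
  | insert a s ha ih =>
    rw [Finset.sum_insert ha, Finset.sum_insert ha]
    exact (l1_add _ _).trans (by linarith)

lemma l1_monomial (n : ℕ) (a : ℝ) : l1 (monomial n a) = |a| := by
  rw [l1_eq (support_monomial_subset n a)]; simp

lemma l1_C (a : ℝ) : l1 (C a) = |a| := by
  rw [← monomial_zero_left]; exact l1_monomial _ _

lemma l1_X : l1 (X : ℝ[X]) = 1 := by
  rw [← monomial_one_one_eq_X, l1_monomial]; simp

lemma l1_one : l1 (1 : ℝ[X]) = 1 := by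
  rw [← C_1, l1_C]; simp

lemma l1_mul (p q : ℝ[X]) : l1 (p * q) ≤ l1 p * l1 q := by
  have h : p * q = ∑ i ∈ p.support, ∑ j ∈ q.support, monomial (i+j) (p.coeff i * q.coeff j) := by
    conv_lhs => rw [p.as_sum_support, q.as_sum_support]
    rw [Finset.sum_mul_sum]
    simp [monomial_mul_monomial]
  rw [h]
  refine (l1_sum _ _).trans ?_
  unfold l1
  rw [Finset.sum_mul_sum]
  refine Finset.sum_le_sum fun i _ => ?_
  refine (l1_sum _ _).trans (le_of_eq ?_)
  refine Finset.sum_congr rfl fun j _ => ?_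
  rw [l1_monomial, abs_mul]

lemma l1_pow (p : ℝ[X]) (n : ℕ) : l1 (p ^ n) ≤ l1 p ^ n := by
  induction n with
  | zero => simp [l1_one]
  | succ n ih =>
    rw [pow_succ, pow_succ]
    exact (l1_mul _ _).trans (mul_le_mul_of_nonneg_right ih (l1_nonneg _))

lemma l1_comp (p q : ℝ[X]) (hq : l1 q ≤ 1) : l1 (p.comp q) ≤ l1 p := by
  rw [comp_eq_sum_left, Polynomial.sum]
  refine (l1_sum _ _).trans ?_
  unfold l1
  refine Finset.sum_le_sum fun i _ => ?_
  refine (l1_mul _ _).trans ?_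
  rw [l1_C]
  have := (l1_pow q i).trans (pow_le_one₀ (l1_nonneg q) hq)
  nlinarith [abs_nonneg (p.coeff i)]

lemma l1_divX (p : ℝ[X]) : l1 p.divX ≤ l1 p := by
  have h1 : l1 p.divX = ∑ i ∈ Finset.range (p.natDegree + 1), |p.coeff (i+1)| := by
    rw [l1_eq (s := Finset.range (p.natDegree + 1))]
    · simp [coeff_divX]
    · intro i hi
      have := le_natDegree_of_mem_supp i hi
      have := natDegree_divX_le (p := p)
      simp; omega
  have h2 : l1 p = ∑ i ∈ Finset.range (p.natDegree + 1 + 1), |p.coeff i| := by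
    apply l1_eq
    intro i hi
    have := le_natDegree_of_mem_supp i hi
    simp; omega
  rw [h1, h2, Finset.sum_range_succ' _ (p.natDegree + 1)]
  linarith [abs_nonneg (p.coeff 0)]

lemma abs_eval_le (p : ℝ[X]) {x : ℝ} (hx : |x| ≤ 1) : |p.eval x| ≤ l1 p := by
  rw [eval_eq_sum, Polynomial.sum]
  refine (Finset.abs_sum_le_sum_abs _ _).trans ?_
  unfold l1
  refine Finset.sum_le_sum fun i _ => ?_
  rw [abs_mul, abs_pow]
  have := pow_le_one₀ (abs_nonneg x) hx (n := i)
  nlinarith [abs_nonneg (p.coeff i)]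

lemma exists_antideriv (p : ℝ[X]) : ∃ A : ℝ[X], derivative A = p ∧ l1 A ≤ l1 p ∧
    A.natDegree ≤ p.natDegree + 1 := by
  refine ⟨∑ i ∈ p.support, monomial (i+1) (p.coeff i / (i+1)), ?_, ?_, ?_⟩
  · rw [derivative_sum]
    conv_rhs => rw [p.as_sum_support]
    refine Finset.sum_congr rfl fun i _ => ?_
    rw [derivative_monomial]
    have : (i:ℝ) + 1 ≠ 0 := by positivity
    simp only [Nat.add_sub_cancel]
    congr 1
    push_cast
    field_simp
  · refine (l1_sum _ _).trans ?_
    unfold l1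
    refine Finset.sum_le_sum fun i _ => ?_
    change l1 _ ≤ _
    rw [l1_monomial, abs_div]
    apply div_le_self (abs_nonneg _)
    rw [abs_of_nonneg (by positivity)]
    linarith [(Nat.cast_nonneg i : (0:ℝ) ≤ i)]
  · apply natDegree_sum_le_of_forall_le
    intro i hi
    refine (natDegree_monomial_le _).trans ?_
    have := le_natDegree_of_mem_supp i hi
    omega

lemma l1_T (n : ℕ) : l1 (Chebyshev.T ℝ n) ≤ 3 ^ n := by
  induction n using Nat.strong_induction_on with
  | _ n ih =>
    match n with
    | 0 => simp [l1_one]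
    | 1 => simp [l1_X]
    | n+2 =>
      have h0 := ih n (by omega)
      have h1 := ih (n+1) (by omega)
      push_cast at h1 ⊢
      rw [Chebyshev.T_add_two]
      have e : (2 : ℝ[X]) = C 2 := rfl
      have hx : l1 ((2:ℝ[X]) * X) ≤ 2 := by
        refine (l1_mul _ _).trans ?_
        rw [e, l1_C, l1_X]; norm_num
      have h2 := l1_sub (2 * X * Chebyshev.T ℝ (n+1)) (Chebyshev.T ℝ n)
      have h3 := l1_mul (2 * X) (Chebyshev.T ℝ (n+1))
      have h4 : l1 (2 * X) * l1 (Chebyshev.T ℝ (n+1)) ≤ 2 * 3^(n+1) :=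
        mul_le_mul hx h1 (l1_nonneg _) (by norm_num)
      have h5 : (0:ℝ) < 3^n := by positivity
      rw [pow_succ] at h4
      rw [pow_succ, pow_succ]
      linarith

lemma natDegree_T_le (n : ℕ) : (Chebyshev.T ℝ n).natDegree ≤ n := by
  induction n using Nat.strong_induction_on with
  | _ n ih =>
    match n with
    | 0 => simp
    | 1 => simp
    | n+2 =>
      have h0 := ih n (by omega)
      have h1 := ih (n+1) (by omega)
      push_cast at h1 ⊢
      rw [Chebyshev.T_add_two]
      refine (natDegree_sub_le _ _).trans (max_le ?_ (by omega))
      refine natDegree_mul_le.trans ?_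
      have : (2 * X : ℝ[X]).natDegree ≤ 1 := by
        refine natDegree_mul_le.trans ?_
        simp
      omega

/-- The basic kernel: `q_N(x) = T_N(x)/x`. -/
lemma exists_q (k : ℕ) : ∃ q : ℝ[X], l1 q ≤ 3 ^ (2*k+1) ∧ q.natDegree ≤ 2 * k ∧
    (∀ θ : ℝ, Real.cos θ * q.eval (Real.cos θ) = Real.cos ((2*k+1 : ℕ) * θ)) := by
  refine ⟨(Chebyshev.T ℝ (2*k+1 : ℕ)).divX, (l1_divX _).trans (l1_T _), ?_, ?_⟩
  · rw [natDegree_divX_eq_natDegree_tsub_one]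
    have := natDegree_T_le (2*k+1)
    omega
  · intro θ
    have h := congrArg (eval (Real.cos θ)) (divX_mul_X_add (Chebyshev.T ℝ (2*k+1 : ℕ)))
    have h0 : (Chebyshev.T ℝ (2*k+1 : ℕ)).coeff 0 = 0 := by
      have h1 := Chebyshev.T_real_cos (Real.pi / 2) (2*k+1 : ℕ)
      rw [Real.cos_pi_div_two] at h1
      rw [coeff_zero_eq_eval_zero, h1, Real.cos_eq_zero_iff]
      exact ⟨k, by push_cast; ring⟩
    rw [h0] at h
    rw [Chebyshev.T_real_cos] at h
    simp only [eval_add, eval_mul, eval_X, eval_C, add_zero] at h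
    rw [mul_comm, h]
    push_cast; rfl


lemma abs_sin_nat_mul_le (n : ℕ) (φ : ℝ) : |Real.sin (n * φ)| ≤ n * |Real.sin φ| := by
  induction n with
  | zero => simp
  | succ n ih =>
    have e : ((n+1 : ℕ) : ℝ) * φ = n * φ + φ := by push_cast; ring
    rw [e, Real.sin_add]
    have h1 := Real.abs_cos_le_one φ
    have h2 := Real.abs_cos_le_one (n * φ)
    refine (abs_add_le _ _).trans ?_
    rw [abs_mul, abs_mul]
    push_cast
    nlinarith [abs_nonneg (Real.sin φ), abs_nonneg (Real.sin (n*φ))]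

lemma q_sin {k : ℕ} {q : ℝ[X]}
    (hq : ∀ θ : ℝ, Real.cos θ * q.eval (Real.cos θ) = Real.cos ((2*k+1 : ℕ) * θ))
    {x : ℝ} (h1 : -1 ≤ x) (h2 : x ≤ 1) :
    x * q.eval x = (-1)^k * Real.sin ((2*k+1 : ℕ) * Real.arcsin x) := by
  have h := hq (Real.arccos x)
  rw [Real.cos_arccos h1 h2] at h
  rw [h, Real.arccos]
  have e : ((2*k+1 : ℕ):ℝ) * (Real.pi / 2 - Real.arcsin x)
    = (Real.pi / 2 - (2*k+1 : ℕ) * Real.arcsin x) + k * Real.pi := by push_cast; ring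
  rw [e, Real.cos_add_nat_mul_pi, Real.cos_pi_div_two_sub]

lemma q_facts {k : ℕ} {q : ℝ[X]}
    (hq : ∀ θ : ℝ, Real.cos θ * q.eval (Real.cos θ) = Real.cos ((2*k+1 : ℕ) * θ))
    {x : ℝ} (h1 : -1 ≤ x) (h2 : x ≤ 1) (h0 : x ≠ 0) :
    (x * q.eval x)^2 ≤ 1 ∧ (q.eval x)^2 ≤ ((2*k+1 : ℕ):ℝ)^2 ∧ q.eval (-x) = q.eval x := by
  have e := q_sin hq h1 h2
  have e' := q_sin hq (x := -x) (by linarith) (by linarith)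
  have hs : (x * q.eval x)^2 = Real.sin ((2*k+1 : ℕ) * Real.arcsin x)^2 := by
    rw [e, mul_pow, ← pow_mul, mul_comm k 2, pow_mul]; simp
  refine ⟨?_, ?_, ?_⟩
  · rw [hs]; exact Real.sin_sq_le_one _
  · have h := abs_sin_nat_mul_le (2*k+1) (Real.arcsin x)
    rw [Real.sin_arcsin h1 h2] at h
    have h3 := pow_le_pow_left₀ (abs_nonneg _) h 2
    rw [sq_abs, ← hs, mul_pow, mul_pow, sq_abs, mul_comm] at h3
    exact le_of_mul_le_mul_right h3 (by positivity)
  · rw [Real.arcsin_neg, mul_neg, Real.sin_neg, mul_neg, ← e] at e'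
    have : x * (q.eval (-x) - q.eval x) = 0 := by linarith
    rcases mul_eq_zero.mp this with h | h
    · exact absurd h h0
    · linarith

lemma q_lower {k : ℕ} {q : ℝ[X]}
    (hq : ∀ θ : ℝ, Real.cos θ * q.eval (Real.cos θ) = Real.cos ((2*k+1 : ℕ) * θ))
    {x : ℝ} (h1 : 0 < x) (h2 : x * (2*k+1 : ℕ) ≤ 1) :
    (((2*k+1 : ℕ):ℝ) / 2)^2 ≤ (q.eval x)^2 := by
  set N : ℝ := ((2*k+1 : ℕ):ℝ) with hN
  have hN1 : 1 ≤ N := by rw [hN]; exact_mod_cast Nat.le_add_left 1 (2*k)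
  have hx1 : x ≤ 1 := by nlinarith
  have e := q_sin hq (x := x) (by linarith) hx1
  have hs : (x * q.eval x)^2 = Real.sin (N * Real.arcsin x)^2 := by
    rw [e, mul_pow, ← pow_mul, mul_comm k 2, pow_mul]; simp [hN]
  set φ := Real.arcsin x with hφ
  have hφx : Real.sin φ = x := Real.sin_arcsin (by linarith) hx1
  have hφ0 : 0 ≤ φ := Real.arcsin_nonneg.mpr h1.le
  have hφ1 : φ ≤ Real.pi / 2 := Real.arcsin_le_pi_div_two x
  have hpi := Real.pi_pos
  have hpi4 := Real.pi_le_four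
  have j := Real.mul_le_sin hφ0 hφ1
  rw [hφx] at j
  have j2 : φ * N ≤ Real.pi / 2 := by
    have : 2 / Real.pi * φ * N ≤ 1 := by nlinarith
    have h3 : φ * N = (2 / Real.pi * φ * N) * (Real.pi / 2) := by field_simp
    rw [h3]; nlinarith
  have j3 := Real.mul_le_sin (x := N * φ) (by positivity) (by linarith)
  have j4 : x ≤ φ := by rw [← hφx]; exact Real.sin_le hφ0
  have j5 : (1:ℝ)/2 ≤ 2 / Real.pi := by
    rw [div_le_div_iff₀ (by norm_num) hpi]; linarith
  have j6 : N / 2 * x ≤ Real.sin (N * φ) := by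
    have : (1:ℝ)/2 * (N * x) ≤ 2 / Real.pi * (N * φ) := by gcongr
    linarith
  have j7 := pow_le_pow_left₀ (by positivity) j6 2
  rw [← hs, mul_pow, mul_pow, mul_comm (x^2)] at j7
  exact le_of_mul_le_mul_right j7 (by positivity)

lemma integral_cauchy_le {N : ℝ} (hN : 1 ≤ N) :
    ∫ x in (-1:ℝ)..1, (1 + (N*x)^2)⁻¹ ≤ 4 / N := by
  have h := intervalIntegral.integral_comp_mul_left (a := -1) (b := 1) (fun u : ℝ => (1 + u^2)⁻¹)
    (c := N) (by linarith)
  rw [h, integral_inv_one_add_sq, smul_eq_mul, div_eq_inv_mul]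
  gcongr
  have h1 := Real.arctan_lt_pi_div_two (N * 1)
  have h2 := Real.neg_pi_div_two_lt_arctan (N * -1)
  linarith [Real.pi_le_four]

lemma second_moment_bound {k : ℕ} {q : ℝ[X]}
    (hq : ∀ θ : ℝ, Real.cos θ * q.eval (Real.cos θ) = Real.cos ((2*k+1 : ℕ) * θ)) :
    ∫ x in (-1:ℝ)..1, x^2 * ((1 - (2*k+1 : ℕ) * x)^2 * (q.eval x)^6) ≤
      32 * ((2*k+1 : ℕ):ℝ)^3 := by
  set N : ℝ := ((2*k+1 : ℕ):ℝ) with hN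
  have hN1 : 1 ≤ N := by rw [hN]; exact_mod_cast Nat.le_add_left 1 (2*k)
  have hc : Continuous fun x : ℝ => (1 + (N*x)^2)⁻¹ := by
    apply Continuous.inv₀ (by fun_prop)
    intro x; positivity
  have key : ∀ x ∈ Set.Icc (-1:ℝ) 1, x^2 * ((1 - N * x)^2 * (q.eval x)^6) ≤
      8 * N^4 * (1 + (N*x)^2)⁻¹ := by
    intro x hx
    rw [← div_eq_mul_inv, le_div_iff₀ (by positivity)]
    by_cases h0 : x = 0
    · subst h0; simp; positivity
    obtain ⟨f1, f2, -⟩ := q_facts hq hx.1 hx.2 h0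
    rw [← hN] at f2
    generalize eval x q = y at *
    have a1 : x^2 * y^6 ≤ N^4 := by
      have : x^2*y^6 = (x*y)^2 * (y^2)^2 := by ring
      rw [this]
      calc _ ≤ 1 * (N^2)^2 := by gcongr
        _ = N^4 := by ring
    have a2 : N^4 * x^4 * x^2 * y^6 ≤ N^4 := by
      have : N^4 * x^4 * x^2 * y^6 = N^4 * ((x*y)^2)^3 := by ring
      rw [this]
      calc _ ≤ N^4 * 1^3 := by gcongr
        _ = N^4 := by ring
    have a3 : (1 - N*x)^2 ≤ 2 * (1 + (N*x)^2) := by nlinarith [sq_nonneg (1 + N*x)]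
    have a4 : (1 + (N*x)^2)^2 ≤ 2 * (1 + N^4*x^4) := by nlinarith [sq_nonneg (1 - (N*x)^2)]
    calc x^2 * ((1 - N * x)^2 * y^6) * (1 + (N*x)^2)
        = (1 - N * x)^2 * ((x^2 * y^6) * (1 + (N*x)^2)) := by ring
      _ ≤ 2 * (1 + (N*x)^2) * ((x^2 * y^6) * (1 + (N*x)^2)) := by gcongr
      _ = 2 * (1 + (N*x)^2)^2 * (x^2 * y^6) := by ring
      _ ≤ 2 * (2 * (1 + N^4*x^4)) * (x^2 * y^6) := by gcongr
      _ = 4 * (x^2 * y^6 + N^4 * x^4 * x^2 * y^6) := by ring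
      _ ≤ 8 * N^4 := by linarith
  calc _ ≤ ∫ x in (-1:ℝ)..1, 8 * N^4 * (1 + (N*x)^2)⁻¹ := by
        apply intervalIntegral.integral_mono_on (by norm_num)
        · exact Continuous.intervalIntegrable (by fun_prop) _ _
        · exact Continuous.intervalIntegrable (by fun_prop) _ _
        · exact key
    _ ≤ 8 * N^4 * (4 / N) := by
        rw [intervalIntegral.integral_const_mul]
        have := integral_cauchy_le hN1
        gcongr
    _ = 32 * N^3 := by field_simp; ring

lemma first_moment_bound {k : ℕ} {q : ℝ[X]}
    (hq : ∀ θ : ℝ, Real.cos θ * q.eval (Real.cos θ) = Real.cos ((2*k+1 : ℕ) * θ)) :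
    ((2*k+1 : ℕ):ℝ)^4 / 96 ≤
    ∫ x in (-1:ℝ)..1, -x * ((1 - (2*k+1 : ℕ) * x)^2 * (q.eval x)^6) := by
  set N : ℝ := ((2*k+1 : ℕ):ℝ) with hN
  have hN1 : 1 ≤ N := by rw [hN]; exact_mod_cast Nat.le_add_left 1 (2*k)
  set f : ℝ → ℝ := fun x => -x * ((1 - N * x)^2 * (q.eval x)^6) with hf
  have hfc : Continuous f := by fun_prop
  have hneg : ∫ x in (-1:ℝ)..1, f (-x) = ∫ x in (-1:ℝ)..1, f x := by
    rw [intervalIntegral.integral_comp_neg]; simp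
  have hsum : ∫ x in (-1:ℝ)..1, (f x + f (-x)) = 2 * ∫ x in (-1:ℝ)..1, f x := by
    rw [intervalIntegral.integral_add, hneg]
    · ring
    · exact hfc.intervalIntegrable _ _
    · exact Continuous.intervalIntegrable (by fun_prop) _ _
  have heq : ∀ x ∈ Set.Icc (-1:ℝ) 1, f x + f (-x) = 4 * N * x^2 * (q.eval x)^6 := by
    intro x hx
    by_cases h0 : x = 0
    · subst h0; simp [hf]
    obtain ⟨-, -, f3⟩ := q_facts hq hx.1 hx.2 h0
    simp only [hf, f3]
    ring
  have h1N : 1 / N ≤ 1 := by rw [div_le_one (by linarith)]; exact hN1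
  have h0N : 0 < 1 / N := by positivity
  have hge : ∫ x in (0:ℝ)..(1/N), (4 * N * x^2 * (N/2)^6) ≤ ∫ x in (-1:ℝ)..1, (f x + f (-x)) := by
    calc _ ≤ ∫ x in (0:ℝ)..(1/N), (f x + f (-x)) := by
          apply intervalIntegral.integral_mono_on h0N.le
          · exact Continuous.intervalIntegrable (by fun_prop) _ _
          · exact Continuous.intervalIntegrable (by fun_prop) _ _
          · intro x hx
            rw [heq x ⟨by linarith [hx.1], hx.2.trans h1N⟩]
            by_cases h0 : x = 0
            · subst h0; simp
            have hx0 : 0 < x := lt_of_le_of_ne hx.1 (Ne.symm h0)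
            have h2 := q_lower hq hx0 (by rw [← hN, ← le_div_iff₀ (by linarith)]; exact hx.2)
            rw [← hN] at h2
            have h3 := pow_le_pow_left₀ (by positivity) h2 3
            rw [← pow_mul, ← pow_mul] at h3
            norm_num at h3 ⊢
            gcongr
      _ ≤ _ := by
          apply intervalIntegral.integral_mono_interval (by norm_num) h0N.le h1N
          · refine (ae_restrict_iff' measurableSet_Ioc).mpr (ae_of_all _ fun x hx => ?_)
            change 0 ≤ f x + f (-x)
            rw [heq x ⟨hx.1.le, hx.2⟩]
            positivity
          · exact Continuous.intervalIntegrable (by fun_prop) _ _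
  have hcomp : ∫ x in (0:ℝ)..(1/N), (4 * N * x^2 * (N/2)^6) = N^4/48 := by
    rw [intervalIntegral.integral_mul_const, intervalIntegral.integral_const_mul, integral_pow]
    have hN0 : N ≠ 0 := by positivity
    norm_num
    field_simp
    norm_num
  rw [hcomp, hsum] at hge
  linarith

end KM
namespace KM
open Polynomial

lemma exists_P (k : ℕ) : ∃ P : ℝ[X], P.natDegree ≤ 6 * (2*k+1) ∧
    l1 P ≤ 768 * 3^(6*(2*k+1)) ∧ (∀ x ∈ Set.Icc (-1:ℝ) 0, 0 ≤ P.eval x) ∧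
    (∀ x ∈ Set.Icc (0:ℝ) 1, 1 ≤ P.eval x) ∧
    ∫ x in (-1:ℝ)..1, P.eval x ≤ 1 + 3072 / ((2*k+1 : ℕ):ℝ) := by
  obtain ⟨q, hl, hdeg, hq⟩ := exists_q k
  have hfirst := first_moment_bound hq
  have hsecond := second_moment_bound hq
  set N : ℝ := ((2*k+1 : ℕ):ℝ) with hN
  have hN1 : 1 ≤ N := by rw [hN]; exact_mod_cast Nat.le_add_left 1 (2*k)
  set W : ℝ[X] := -X * ((1 - C N * X)^2 * q^6) with hW
  obtain ⟨A, hA, hAl, hAd⟩ := exists_antideriv W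
  have hWe : ∀ x, W.eval x = -x * ((1 - N * x)^2 * (q.eval x)^6) := by
    intro x; simp [hW]
  have hder : ∀ x, HasDerivAt (fun x => A.eval x) (-x * ((1 - N * x)^2 * (q.eval x)^6)) x := by
    intro x
    have := A.hasDerivAt x
    rwa [hA, hWe] at this
  have hWl : l1 W ≤ 4 * N^2 * 3^(6*(2*k+1)) := by
    have h1 : l1 (1 - C N * X) ≤ 2 * N := by
      have := l1_sub 1 (C N * X)
      have h2 := l1_mul (C N) X
      rw [l1_C, l1_X, abs_of_nonneg (by linarith)] at h2
      rw [l1_one] at this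
      linarith
    have h2 := (l1_pow (1 - C N * X) 2).trans (pow_le_pow_left₀ (l1_nonneg _) h1 2)
    have h3 := (l1_pow q 6).trans (pow_le_pow_left₀ (l1_nonneg _) hl 6)
    have h4 := l1_mul (-X) ((1 - C N * X)^2 * q^6)
    have h5 := (l1_mul ((1 - C N * X)^2) (q^6)).trans (mul_le_mul h2 h3 (l1_nonneg _) (by positivity))
    rw [l1_neg, l1_X, one_mul] at h4
    refine h4.trans (h5.trans (le_of_eq ?_))
    rw [← pow_mul, mul_comm (2*k+1) 6]; ring
  have hWd : W.natDegree ≤ 12 * k + 3 := by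
    have h1 : (1 - C N * X : ℝ[X]).natDegree ≤ 1 := by compute_degree
    have h2 := natDegree_pow_le_of_le 2 h1
    have h3 := natDegree_pow_le_of_le 6 hdeg
    have h4 := natDegree_mul_le_of_le h2 h3
    have h5 : (-X : ℝ[X]).natDegree ≤ 1 := by rw [natDegree_neg]; exact natDegree_X_le
    have h6 := natDegree_mul_le_of_le h5 h4
    refine h6.trans ?_
    omega
  set Z : ℝ := A.eval 1 - A.eval (-1) with hZ
  have hZi : ∫ x in (-1:ℝ)..1, -x * ((1 - N * x)^2 * (q.eval x)^6) = Z := by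
    apply intervalIntegral.integral_eq_sub_of_hasDerivAt (f := fun x => A.eval x)
    · intro x _; exact hder x
    · exact Continuous.intervalIntegrable (by fun_prop) _ _
  rw [hZi] at hfirst
  have hZpos : 0 < Z := lt_of_lt_of_le (by positivity) hfirst
  have hPe : ∀ x, (C Z⁻¹ * (A - C (A.eval (-1)))).eval x = Z⁻¹ * (A.eval x - A.eval (-1)) := by
    intro x; simp
  refine ⟨C Z⁻¹ * (A - C (A.eval (-1))), ?_, ?_, ?_, ?_, ?_⟩
  · refine (natDegree_C_mul_le _ _).trans ?_
    rw [natDegree_sub_C]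
    omega
  · have h1 := l1_mul (C Z⁻¹) (A - C (A.eval (-1)))
    have h2 := l1_sub A (C (A.eval (-1)))
    have h3 := abs_eval_le A (x := -1) (by norm_num)
    rw [l1_C] at h1 h2
    rw [abs_of_pos (inv_pos.mpr hZpos)] at h1
    have h4 : l1 (A - C (A.eval (-1))) ≤ 8 * N^2 * 3^(6*(2*k+1)) := by linarith
    have h5 : Z⁻¹ ≤ 96 / N^2 := by
      rw [inv_le_comm₀ hZpos (by positivity), inv_div]
      refine le_trans ?_ hfirst
      gcongr
      norm_num
    refine h1.trans ?_
    calc _ ≤ 96 / N^2 * (8 * N^2 * 3^(6*(2*k+1))) := by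
          apply mul_le_mul h5 h4 (l1_nonneg _) (by positivity)
      _ = _ := by field_simp; norm_num
  · intro x hx
    rw [hPe]
    have hm : MonotoneOn (fun x => A.eval x) (Set.Icc (-1:ℝ) 0) := by
      apply monotoneOn_of_deriv_nonneg (convex_Icc _ _) A.continuous.continuousOn
      · exact A.differentiable.differentiableOn
      · intro y hy
        rw [interior_Icc] at hy
        rw [(hder y).deriv]
        have : 0 ≤ -y := by linarith [hy.2]
        positivity
    have := hm (Set.left_mem_Icc.mpr (by norm_num)) hx hx.1
    have h2 : 0 ≤ A.eval x - A.eval (-1) := by simpa using this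
    positivity
  · intro x hx
    rw [hPe]
    have hm : AntitoneOn (fun x => A.eval x) (Set.Icc (0:ℝ) 1) := by
      apply antitoneOn_of_deriv_nonpos (convex_Icc _ _) A.continuous.continuousOn
      · exact A.differentiable.differentiableOn
      · intro y hy
        rw [interior_Icc] at hy
        rw [(hder y).deriv]
        have h1 : -y ≤ 0 := by linarith [hy.1]
        exact mul_nonpos_of_nonpos_of_nonneg h1 (by positivity)
    have h1 : A.eval 1 ≤ A.eval x := hm hx (Set.right_mem_Icc.mpr (by norm_num)) hx.2
    rw [inv_mul_eq_div, one_le_div hZpos]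
    linarith
  · simp_rw [hPe]
    rw [intervalIntegral.integral_const_mul]
    have hparts : ∫ x in (-1:ℝ)..1, ((A.eval x - A.eval (-1)) -
        x^2 * ((1 - N * x)^2 * (q.eval x)^6)) = Z := by
      rw [intervalIntegral.integral_eq_sub_of_hasDerivAt
        (f := fun x => x * (A.eval x - A.eval (-1)))]
      · rw [hZ]; ring
      · intro x _
        have := (hasDerivAt_id x).mul ((hder x).sub_const (A.eval (-1)))
        refine HasDerivAt.congr_deriv this ?_
        simp only [id]
        ring
      · exact Continuous.intervalIntegrable (by fun_prop) _ _
    rw [intervalIntegral.integral_sub] at hparts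
    rotate_left
    · exact Continuous.intervalIntegrable (by fun_prop) _ _
    · exact Continuous.intervalIntegrable (by fun_prop) _ _
    have h1 : ∫ x in (-1:ℝ)..1, (A.eval x - A.eval (-1)) ≤ Z + 32 * N^3 := by linarith
    rw [inv_mul_eq_div, div_le_iff₀ hZpos]
    have h2 : 32 * N^3 ≤ 3072 / N * Z := by
      calc 32 * N^3 = 3072 / N * (N^4 / 96) := by field_simp; norm_num
        _ ≤ _ := by gcongr
    linarith

end KM
namespace KM

lemma km_mass {r s : ℝ} (hr : 2 < r) (hs : 0 < s) (hrs : s^2 = 4 * (r - 1)) :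
    ∫ x in (-s)..s, r * Real.sqrt (s^2 - x^2) / (2 * Real.pi * (r^2 - x^2)) = 1 := by
  have hsr : s^2 < r^2 := by nlinarith [sq_pos_of_pos (show 0 < r - 2 by linarith)]
  have hpos : ∀ x ∈ Set.Icc (-s) s, 0 < r^2 - x^2 := by
    intro x hx
    have : x^2 ≤ s^2 := sq_le_sq' hx.1 hx.2
    linarith
  have hd : r^2 - s^2 = (r-2)^2 := by rw [hrs]; ring
  have hpi := Real.pi_pos
  set F : ℝ → ℝ := fun x => r / (2 * Real.pi) * (Real.arcsin (x / s) -
    (r-2)/r * Real.arcsin ((r-2) * x / (s * Real.sqrt (r^2 - x^2)))) with hF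
  have key : ∫ x in (-s)..s, r * Real.sqrt (s^2 - x^2) / (2 * Real.pi * (r^2 - x^2)) = F s - F (-s) := by
    apply intervalIntegral.integral_eq_sub_of_hasDerivAt_of_le (by linarith)
    · apply ContinuousOn.mul continuousOn_const
      apply ContinuousOn.sub
      · fun_prop
      · apply ContinuousOn.mul continuousOn_const
        apply Real.continuous_arcsin.comp_continuousOn
        apply ContinuousOn.div (by fun_prop) (by fun_prop)
        intro x hx
        have := Real.sqrt_pos.mpr (hpos x hx)
        positivity
    · intro x hx
      have hx2 : x^2 < s^2 := sq_lt_sq' hx.1 hx.2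
      have hp := hpos x ⟨hx.1.le, hx.2.le⟩
      have hq : 0 < s^2 - x^2 := by linarith
      set u := Real.sqrt (s^2 - x^2) with hu
      set v := Real.sqrt (r^2 - x^2) with hv
      have hu0 : 0 < u := Real.sqrt_pos.mpr hq
      have hv0 : 0 < v := Real.sqrt_pos.mpr hp
      have hu2 : u^2 = s^2 - x^2 := Real.sq_sqrt hq.le
      have hv2 : v^2 = r^2 - x^2 := Real.sq_sqrt hp.le
      have e1 : 1 - (x/s)^2 = (u/s)^2 := by
        rw [div_pow, div_pow, hu2]; field_simp
      have e2 : 1 - ((r-2)*x/(s*v))^2 = (r*u/(s*v))^2 := by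
        rw [div_pow, div_pow, mul_pow, mul_pow, mul_pow, hu2, hv2, ← hd]
        field_simp
        ring
      have l1 : (x/s)^2 < 1 := by have := sq_pos_of_pos (div_pos hu0 hs); linarith
      have l2 : ((r-2)*x/(s*v))^2 < 1 := by
        have : 0 < (r*u/(s*v))^2 := by positivity
        linarith
      have m1 := abs_lt.mp (sq_lt_one_iff_abs_lt_one _ |>.mp l1)
      have m2 := abs_lt.mp (sq_lt_one_iff_abs_lt_one _ |>.mp l2)
      have D1 : HasDerivAt (fun y => Real.arcsin (y/s)) (1/u) x := by
        have := (Real.hasDerivAt_arcsin (x := x/s) (by linarith) (by linarith)).comp x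
          ((hasDerivAt_id x).div_const s)
        rw [e1, Real.sqrt_sq (by positivity)] at this
        refine HasDerivAt.congr_deriv this ?_
        field_simp
      have Dv : HasDerivAt (fun y => Real.sqrt (r^2 - y^2)) (-x/v) x := by
        have h1 : HasDerivAt (fun y : ℝ => r^2 - y^2) (-(2*x)) x := by
          have := (hasDerivAt_pow 2 x).const_sub (r^2)
          simpa using this
        have := h1.sqrt hp.ne'
        refine HasDerivAt.congr_deriv this ?_
        rw [← hv]; field_simp
      have D2 : HasDerivAt (fun y => Real.arcsin ((r-2) * y / (s * Real.sqrt (r^2 - y^2))))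
          ((r-2)*r/(v^2*u)) x := by
        have h1 := ((hasDerivAt_id x).const_mul (r-2)).div (Dv.const_mul s)
          (by positivity : s * Real.sqrt (r^2 - x^2) ≠ 0)
        have := (Real.hasDerivAt_arcsin (x := (r-2)*x/(s*v)) (by linarith) (by linarith)).comp x h1
        rw [e2, Real.sqrt_sq (by positivity)] at this
        refine HasDerivAt.congr_deriv this ?_
        simp only [id, ← hv]
        have : v^2 + x^2 = r^2 := by linarith
        field_simp
        nlinarith
      have := (D1.sub (D2.const_mul ((r-2)/r))).const_mul (r/(2*Real.pi))
      refine HasDerivAt.congr_deriv this ?_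
      rw [← hv2]
      field_simp
      nlinarith
    · apply ContinuousOn.intervalIntegrable_of_Icc (by linarith)
      apply ContinuousOn.div (by fun_prop) (by fun_prop)
      intro x hx
      have := hpos x hx
      positivity
  rw [key, hF]
  have e3 : Real.sqrt (r^2 - s^2) = r - 2 := by rw [hd, Real.sqrt_sq (by linarith)]
  have hr2 : r - 2 ≠ 0 := by linarith
  have e4 : (r-2) * s / (s * (r-2)) = 1 := by field_simp
  have e5 : (r-2) * -s / (s * (r-2)) = -1 := by field_simp
  have e6 : -s / s = -1 := by field_simp
  simp only [neg_sq, e3, e4, e5, e6, div_self hs.ne', Real.arcsin_one, Real.arcsin_neg_one]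
  field_simp
  ring

lemma km_props (d : ℕ) (hd : 2 ≤ d) : IsProbabilityMeasure (kestenMcKay d) ∧
    ∃ B : ℝ, 0 < B ∧ kestenMcKay d ≤
      ENNReal.ofReal B • (volume.restrict (Set.Icc (-(2*d:ℝ)) (2*d))) := by
  have hd' : (2:ℝ) ≤ d := by exact_mod_cast hd
  set r : ℝ := 2 * d with hr
  set s : ℝ := Real.sqrt (4 * (r - 1)) with hs
  have hs2 : s^2 = 4 * (r-1) := Real.sq_sqrt (by linarith)
  have hs0 : 0 < s := Real.sqrt_pos.mpr (by linarith)
  have hsr : s^2 < r^2 := by nlinarith [sq_pos_of_pos (show 0 < r - 2 by linarith)]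
  have hsr' : s < r := lt_of_pow_lt_pow_left₀ 2 (by linarith) hsr
  set g : ℝ → ℝ := fun x => r * Real.sqrt (s^2 - x^2) / (2 * Real.pi * (r^2 - x^2)) with hg
  have hpi := Real.pi_pos
  have hpos : ∀ x ∈ Set.Icc (-s) s, 0 < r^2 - x^2 := by
    intro x hx
    have : x^2 ≤ s^2 := sq_le_sq' hx.1 hx.2
    linarith
  have hk : (fun x => ENNReal.ofReal (kmDensity d x)) =
      (Set.Icc (-s) s).indicator (fun x => ENNReal.ofReal (g x)) := by
    ext x
    unfold kmDensity
    rw [← hr, ← hs2]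
    by_cases h : x^2 ≤ s^2
    · have : x ∈ Set.Icc (-s) s := abs_le.mp (abs_le_of_sq_le_sq h hs0.le)
      rw [Set.indicator_of_mem this, if_pos h]
    · have : x ∉ Set.Icc (-s) s := fun hx => h (sq_le_sq' hx.1 hx.2)
      rw [Set.indicator_of_notMem this, if_neg h]; simp
  have hgc : ContinuousOn g (Set.Icc (-s) s) := by
    apply ContinuousOn.div (by fun_prop) (by fun_prop)
    intro x hx
    have := hpos x hx
    positivity
  have hg0 : ∀ x ∈ Set.Icc (-s) s, 0 ≤ g x := by
    intro x hx
    have := hpos x hx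
    have : 0 < r := by linarith
    positivity
  have hμ : kestenMcKay d = (volume.restrict (Set.Icc (-s) s)).withDensity
      (fun x => ENNReal.ofReal (g x)) := by
    unfold kestenMcKay
    rw [hk, withDensity_indicator measurableSet_Icc]
  constructor
  · constructor
    rw [hμ, withDensity_apply _ MeasurableSet.univ, Measure.restrict_univ,
      ← ofReal_integral_eq_lintegral_ofReal]
    · rw [integral_Icc_eq_integral_Ioc, ← intervalIntegral.integral_of_le (by linarith),
        km_mass (by linarith) hs0 hs2]
      simp
    · exact hgc.integrableOn_Icc
    · exact (ae_restrict_iff' measurableSet_Icc).mpr (ae_of_all _ hg0)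
  · obtain ⟨B, hB⟩ := isCompact_Icc.bddAbove_image hgc
    refine ⟨max B 1, by positivity, ?_⟩
    rw [hμ]
    calc _ ≤ (volume.restrict (Set.Icc (-s) s)).withDensity
          (fun x => ENNReal.ofReal (max B 1)) := by
          apply withDensity_mono
          refine (ae_restrict_iff' measurableSet_Icc).mpr (ae_of_all _ fun x hx => ?_)
          apply ENNReal.ofReal_le_ofReal
          exact (hB ⟨x, hx, rfl⟩).trans (le_max_left _ _)
      _ = ENNReal.ofReal (max B 1) • (volume.restrict (Set.Icc (-s) s)) := withDensity_const _
      _ ≤ _ := by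
          gcongr
          

end KM
namespace KM
open Polynomial

lemma integrable_of_supp {ν : Measure ℝ} [IsFiniteMeasure ν] {L : ℝ}
    (h : ν (Set.Icc (-L) L)ᶜ = 0) {f : ℝ → ℝ} (hf : Continuous f) : Integrable f ν := by
  have h1 : ν.restrict (Set.Icc (-L) L) = ν := by
    apply Measure.restrict_eq_self_of_ae_mem
    exact h
  have h2 : IntegrableOn f (Set.Icc (-L) L) ν := hf.continuousOn.integrableOn_compact isCompact_Icc
  rwa [IntegrableOn, h1] at h2

lemma moment_bound {ν μ : Measure ℝ} [IsProbabilityMeasure ν] [IsProbabilityMeasure μ] {L : ℝ}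
    (hν : ν (Set.Icc (-L) L)ᶜ = 0) (hμ : μ (Set.Icc (-L) L)ᶜ = 0) {ε : ℝ} (hε : 0 ≤ ε)
    (Q : ℝ[X]) (hm : ∀ m : ℕ, 1 ≤ m → m ≤ Q.natDegree → |(∫ x, x^m ∂ν) - ∫ x, x^m ∂μ| ≤ ε) :
    ∫ x, Q.eval x ∂ν ≤ ∫ x, Q.eval x ∂μ + ε * l1 Q := by
  have hI : ∀ (ρ : Measure ℝ) [IsProbabilityMeasure ρ], ρ (Set.Icc (-L) L)ᶜ = 0 →
      ∫ x, Q.eval x ∂ρ = ∑ i ∈ Q.support, Q.coeff i * ∫ x, x^i ∂ρ := by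
    intro ρ _ hρ
    simp_rw [eval_eq_sum, Polynomial.sum]
    rw [integral_finsetSum]
    · simp_rw [integral_const_mul]
    · intro i _
      exact integrable_of_supp hρ (by fun_prop)
  rw [hI ν hν, hI μ hμ, ← sub_le_iff_le_add', ← Finset.sum_sub_distrib, l1, Finset.mul_sum]
  refine Finset.sum_le_sum fun i hi => ?_
  rw [← mul_sub, mul_comm ε]
  refine (le_abs_self _).trans ?_
  rw [abs_mul]
  apply mul_le_mul_of_nonneg_left _ (abs_nonneg _)
  rcases Nat.eq_zero_or_pos i with h0 | h0
  · subst h0; simpa using hε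
  · exact hm i h0 (le_natDegree_of_mem_supp i hi)

lemma tail_bound {ν μ : Measure ℝ} [IsProbabilityMeasure ν] [IsProbabilityMeasure μ] {L B : ℝ}
    (hL : 1 ≤ L) (hB : 0 < B)
    (hν : ν (Set.Icc (-L) L)ᶜ = 0) (hμ : μ (Set.Icc (-L) L)ᶜ = 0)
    (hμB : μ ≤ ENNReal.ofReal B • (volume.restrict (Set.Icc (-L) L)))
    {ε δ : ℝ} (hε : 0 ≤ ε) (P : ℝ[X])
    (hP0 : ∀ x ∈ Set.Icc (-1:ℝ) 0, 0 ≤ P.eval x) (hP1 : ∀ x ∈ Set.Icc (0:ℝ) 1, 1 ≤ P.eval x)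
    (hPI : ∫ x in (-1:ℝ)..1, P.eval x ≤ 1 + δ)
    (hm : ∀ m : ℕ, 1 ≤ m → m ≤ P.natDegree → |(∫ x, x^m ∂ν) - ∫ x, x^m ∂μ| ≤ ε)
    {s : ℝ} (hs : s = 1 ∨ s = -1) {t : ℝ} (ht : t ∈ Set.Icc (-L) L) :
    ν.real {x | 0 ≤ s * (x - t)} ≤ μ.real {x | 0 ≤ s * (x - t)} + 2 * L * B * δ + ε * l1 P := by
  set E : Set ℝ := {x | 0 ≤ s * (x - t)} with hE
  have hEm : MeasurableSet E := measurableSet_le measurable_const (by fun_prop)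
  have hs2 : |s| = 1 := by rcases hs with h | h <;> simp [h]
  have hss : s * s = 1 := by rcases hs with h | h <;> simp [h]
  have hs0 : s ≠ 0 := by intro h; simp [h] at hss
  set Q : ℝ[X] := P.comp (C (s / (2*L)) * (X - C t)) with hQ
  have hQe : ∀ x, Q.eval x = P.eval (s/(2*L) * (x - t)) := by intro x; simp [hQ]
  have hQl : l1 Q ≤ l1 P := by
    apply l1_comp
    refine (l1_mul _ _).trans ?_
    have h1 := l1_sub X (C t)
    rw [l1_X, l1_C] at h1
    have h2 : |t| ≤ L := abs_le.mpr ht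
    rw [l1_C, abs_div, hs2, abs_of_pos (by linarith : 0 < 2 * L)]
    calc 1 / (2*L) * l1 (X - C t) ≤ 1/(2*L) * (2*L) := by gcongr; linarith
      _ = 1 := by field_simp
  have hQd : Q.natDegree ≤ P.natDegree := by
    refine natDegree_comp_le.trans ?_
    have : (C (s / (2*L)) * (X - C t)).natDegree ≤ 1 := by compute_degree
    nlinarith
  have hge : ∀ x ∈ Set.Icc (t - 2*L) (t+2*L), E.indicator 1 x ≤ Q.eval x := by
    intro x hx
    rw [hQe]
    have e : s/(2*L) * (x - t) = s * (x - t) / (2*L) := by ring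
    have hab : |s * (x-t)| ≤ 2*L := by
      rw [abs_mul, hs2, one_mul, abs_le]; constructor <;> linarith [hx.1, hx.2]
    rw [abs_le] at hab
    rw [e]
    by_cases h : x ∈ E
    · rw [Set.indicator_of_mem h]
      have h' : 0 ≤ s * (x - t) := h
      apply hP1
      constructor
      · positivity
      · rw [div_le_one (by linarith)]; exact hab.2
    · rw [Set.indicator_of_notMem h]
      have h' : s * (x - t) < 0 := not_le.mp h
      apply hP0
      constructor
      · rw [le_div_iff₀ (by linarith)]; linarith
      · exact div_nonpos_of_nonpos_of_nonneg h'.le (by linarith)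
  have hsub : Set.Icc (-L) L ⊆ Set.Icc (t - 2*L) (t+2*L) :=
    Set.Icc_subset_Icc (by linarith [ht.2]) (by linarith [ht.1])
  have hind : ∀ (ρ : Measure ℝ) [IsFiniteMeasure ρ], Integrable (E.indicator (1 : ℝ → ℝ)) ρ := by
    intro ρ _
    exact (integrable_const (1:ℝ)).indicator hEm
  have s1 : ν.real E ≤ ∫ x, Q.eval x ∂ν := by
    rw [← integral_indicator_one hEm]
    apply integral_mono_ae (hind ν) (integrable_of_supp hν Q.continuous)
    have : ∀ᵐ x ∂ν, x ∈ Set.Icc (-L) L := hν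
    filter_upwards [this] with x hx
    exact hge x (hsub hx)
  have s2 := moment_bound hν hμ hε Q (fun m h1 h2 => hm m h1 (h2.trans hQd))
  set h : ℝ → ℝ := fun x => Q.eval x - E.indicator 1 x with hh
  have hint : IntegrableOn h (Set.Icc (t - 2*L) (t+2*L)) := by
    apply Integrable.sub
    · exact Q.continuous.continuousOn.integrableOn_Icc
    · exact hind _
  have h0 : ∀ x ∈ Set.Icc (t - 2*L) (t+2*L), 0 ≤ h x := fun x hx => sub_nonneg.mpr (hge x hx)
  have s3 : ∫ x, Q.eval x ∂μ - μ.real E = ∫ x, h x ∂μ := by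
    rw [hh, integral_sub (integrable_of_supp hμ Q.continuous) (hind μ), integral_indicator_one hEm]
  have s4 : ∫ x, h x ∂μ ≤ B * ∫ x in Set.Icc (-L) L, h x := by
    have := integral_mono_measure (f := h) hμB ?_ ?_
    · rw [integral_smul_measure, ENNReal.toReal_ofReal hB.le, smul_eq_mul] at this
      exact this
    · apply Measure.ae_smul_measure
      refine (ae_restrict_iff' measurableSet_Icc).mpr (ae_of_all _ fun x hx => h0 x (hsub hx))
    · exact (hint.mono_set hsub).smul_measure ENNReal.ofReal_ne_top
  have s5 : ∫ x in Set.Icc (-L) L, h x ≤ ∫ x in Set.Icc (t - 2*L) (t+2*L), h x := by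
    apply setIntegral_mono_set hint
    · exact (ae_restrict_iff' measurableSet_Icc).mpr (ae_of_all _ h0)
    · exact LE.le.eventuallyLE hsub
  have s6 : ∫ x in Set.Icc (t - 2*L) (t+2*L), h x ≤ 2 * L * δ := by
    have hcv : ∫ x in (t - 2*L)..(t+2*L), P.eval (s/(2*L) * x - s/(2*L) * t) =
        2 * L * ∫ x in (-1:ℝ)..1, P.eval x := by
      rw [intervalIntegral.integral_comp_mul_sub (fun x => P.eval x) (by positivity)]
      have e1 : s/(2*L) * (t - 2*L) - s/(2*L) * t = -s := by field_simp; ring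
      have e2 : s/(2*L) * (t + 2*L) - s/(2*L) * t = s := by field_simp; ring
      rw [e1, e2, smul_eq_mul, inv_div]
      rcases hs with h | h
      · rw [h]; simp
      · rw [h, intervalIntegral.integral_symm]; simp; ring
    have hvol : ∫ x in Set.Icc (t - 2*L) (t+2*L), E.indicator (1 : ℝ → ℝ) x = 2 * L := by
      rw [integral_indicator_one hEm, measureReal_restrict_apply hEm]
      rcases hs with h | h
      · have : E ∩ Set.Icc (t - 2*L) (t+2*L) = Set.Icc t (t + 2*L) := by
          ext x; simp only [hE, h, Set.mem_inter_iff, Set.mem_ofPred_eq, Set.mem_Icc]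
          constructor
          · rintro ⟨a, b, c⟩; constructor <;> linarith
          · rintro ⟨a, b⟩; refine ⟨?_, ?_, ?_⟩ <;> linarith
        rw [this, Real.volume_real_Icc_of_le (by linarith)]; ring
      · have : E ∩ Set.Icc (t - 2*L) (t+2*L) = Set.Icc (t - 2*L) t := by
          ext x; simp only [hE, h, Set.mem_inter_iff, Set.mem_ofPred_eq, Set.mem_Icc]
          constructor
          · rintro ⟨a, b, c⟩; constructor <;> linarith
          · rintro ⟨a, b⟩; refine ⟨?_, ?_, ?_⟩ <;> linarith
        rw [this, Real.volume_real_Icc_of_le (by linarith)]; ring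
    rw [hh, integral_sub Q.continuous.continuousOn.integrableOn_Icc (hind _), hvol,
      integral_Icc_eq_integral_Ioc, ← intervalIntegral.integral_of_le (by linarith)]
    simp_rw [hQe, mul_sub]
    rw [hcv]
    nlinarith
  have s7 : B * ∫ x in Set.Icc (-L) L, h x ≤ B * (2 * L * δ) := by
    apply mul_le_mul_of_nonneg_left (s5.trans s6) hB.le
  have s8 : ε * l1 Q ≤ ε * l1 P := by gcongr
  nlinarith

lemma disc_bound {ν μ : Measure ℝ} [IsProbabilityMeasure ν] [IsProbabilityMeasure μ] {L B : ℝ}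
    (hL : 1 ≤ L) (hB : 0 < B)
    (hν : ν (Set.Icc (-L) L)ᶜ = 0)
    (hμB : μ ≤ ENNReal.ofReal B • (volume.restrict (Set.Icc (-L) L)))
    {ε δ : ℝ} (hε : 0 ≤ ε) (hδ : 0 ≤ δ) (P : ℝ[X])
    (hP0 : ∀ x ∈ Set.Icc (-1:ℝ) 0, 0 ≤ P.eval x) (hP1 : ∀ x ∈ Set.Icc (0:ℝ) 1, 1 ≤ P.eval x)
    (hPI : ∫ x in (-1:ℝ)..1, P.eval x ≤ 1 + δ)
    (hm : ∀ m : ℕ, 1 ≤ m → m ≤ P.natDegree → |(∫ x, x^m ∂ν) - ∫ x, x^m ∂μ| ≤ ε) :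
    discrepancy ν μ ≤ 2 * (2 * L * B * δ + ε * l1 P) := by
  have hμ : μ (Set.Icc (-L) L)ᶜ = 0 := by
    apply le_antisymm _ zero_le
    refine (hμB _).trans ?_
    simp [Measure.restrict_apply measurableSet_Icc.compl]
  have hat : ∀ t, μ.real {t} = 0 := by
    intro t
    have : μ {t} = 0 := by
      apply le_antisymm _ zero_le
      refine (hμB _).trans ?_
      simp
    simp [measureReal_def, this]
  set η := 2 * L * B * δ + ε * l1 P with hη
  have hη0 : 0 ≤ η := by have := l1_nonneg P; positivity
  have zero_of : ∀ (ρ : Measure ℝ), ρ (Set.Icc (-L) L)ᶜ = 0 → ∀ S : Set ℝ,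
      S ⊆ (Set.Icc (-L) L)ᶜ → ρ.real S = 0 := by
    intro ρ hρ S hS
    simp [measureReal_def, measure_mono_null hS hρ]
  have one_of : ∀ S : Set ℝ, MeasurableSet S → Sᶜ ⊆ (Set.Icc (-L) L)ᶜ → μ.real S = 1 := by
    intro S hSm hS
    have := zero_of μ hμ _ hS
    rw [probReal_compl_eq_one_sub hSm] at this
    linarith
  have up1 : ∀ t, ν.real (Set.Ici t) ≤ μ.real (Set.Ici t) + η := by
    intro t
    by_cases ht : t ∈ Set.Icc (-L) L
    · have := tail_bound hL hB hν hμ hμB hε P hP0 hP1 hPI hm (s := 1) (Or.inl rfl) ht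
      have e : {x | 0 ≤ (1:ℝ) * (x - t)} = Set.Ici t := by ext x; simp
      rw [e] at this; linarith
    · rcases lt_or_ge t (-L) with h | h
      · rw [one_of (Set.Ici t) measurableSet_Ici]
        · linarith [measureReal_le_one (μ := ν) (s := Set.Ici t)]
        · intro x hx hx'
          simp only [Set.mem_compl_iff, Set.mem_Ici, not_le] at hx
          linarith [hx'.1]
      · have h2 : L < t := by by_contra h3; exact ht ⟨h, not_lt.mp h3⟩
        rw [zero_of ν hν (Set.Ici t)]
        · positivity
        · intro x hx hx'
          linarith [hx'.2, Set.mem_Ici.mp hx]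
  have up2 : ∀ t, ν.real (Set.Iic t) ≤ μ.real (Set.Iic t) + η := by
    intro t
    by_cases ht : t ∈ Set.Icc (-L) L
    · have := tail_bound hL hB hν hμ hμB hε P hP0 hP1 hPI hm (s := -1) (Or.inr rfl) ht
      have e : {x | 0 ≤ (-1:ℝ) * (x - t)} = Set.Iic t := by ext x; simp
      rw [e] at this; linarith
    · rcases lt_or_ge t (-L) with h | h
      · rw [zero_of ν hν (Set.Iic t)]
        · positivity
        · intro x hx hx'
          linarith [hx'.1, Set.mem_Iic.mp hx]
      · have h2 : L < t := by by_contra h3; exact ht ⟨h, not_lt.mp h3⟩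
        rw [one_of (Set.Iic t) measurableSet_Iic]
        · linarith [measureReal_le_one (μ := ν) (s := Set.Iic t)]
        · intro x hx hx'
          simp only [Set.mem_compl_iff, Set.mem_Iic, not_le] at hx
          linarith [hx'.2]
  have dec1 : ∀ (ρ : Measure ℝ) [IsProbabilityMeasure ρ] (a b : ℝ), a ≤ b →
      ρ.real (Set.Icc a b) = ρ.real (Set.Ici a) + ρ.real (Set.Iic b) - 1 := by
    intro ρ _ a b hab
    have := measureReal_union_add_inter (μ := ρ) (s := Set.Ici a) (t := Set.Iic b) measurableSet_Iic
    have e : Set.Ici a ∪ Set.Iic b = Set.univ := by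
      ext x; simp only [Set.mem_union, Set.mem_Ici, Set.mem_Iic, Set.mem_univ, iff_true]
      rcases le_total a x with h | h
      · exact Or.inl h
      · exact Or.inr (h.trans hab)
    rw [e, Set.Ici_inter_Iic, probReal_univ] at this
    linarith
  have cI : ∀ (ρ : Measure ℝ) [IsProbabilityMeasure ρ] (a : ℝ),
      ρ.real (Set.Ici a) = 1 - (ρ.real (Set.Iic a) - ρ.real {a}) := by
    intro ρ _ a
    have := dec1 ρ a a le_rfl
    rw [Set.Icc_self] at this
    linarith
  apply csSup_le
  · exact ⟨_, 0, 0, le_rfl, rfl⟩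
  · rintro r ⟨a, b, hab, rfl⟩
    change |ν.real (Set.Icc a b) - μ.real (Set.Icc a b)| ≤ _
    rw [dec1 ν a b hab, dec1 μ a b hab, abs_le]
    have u1 := up1 a
    have u2 := up2 b
    have u3 := up1 b
    have u4 := up2 a
    have c1 := cI ν a
    have c2 := cI ν b
    have c3 := cI μ a
    have c4 := cI μ b
    have p1 : 0 ≤ ν.real {a} := measureReal_nonneg
    have p2 : 0 ≤ ν.real {b} := measureReal_nonneg
    rw [hat] at c3 c4
    constructor <;> linarith

end KM

/-- Fix d ≥ 2. There exist α, β, C > 0 depending only on d such that for every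
real p ≥ 2 and every Borel probability measure ν on ℝ supported in [−2d, 2d], if the m-th
moments of ν and f_{2d} differ by at most p^{−β} for all 1 ≤ m ≤ α·log p, then
D(ν, f_{2d}) ≤ C / log p. -/
theorem stmt11 (d : ℕ) (hd : 2 ≤ d) :
    ∃ α β C : ℝ, 0 < α ∧ 0 < β ∧ 0 < C ∧
      ∀ (p : ℝ), 2 ≤ p →
        ∀ ν : Measure ℝ, IsProbabilityMeasure ν →
          ν (Set.Icc (-(2 * d : ℝ)) (2 * d))ᶜ = 0 →
          (∀ m : ℕ, 1 ≤ m → (m : ℝ) ≤ α * Real.log p →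
            |(∫ x, x ^ m ∂ν) - ∫ x, x ^ m ∂(kestenMcKay d)| ≤ p ^ (-β)) →
          discrepancy ν (kestenMcKay d) ≤ C / Real.log p := by
  obtain ⟨hprob, B, hB, hμB⟩ := KM.km_props d hd
  have hd' : (2:ℝ) ≤ d := by exact_mod_cast hd
  refine ⟨30, 60, 2 * (2 * (2 * d) * B * 3072 + 768), by norm_num, by norm_num, by positivity, ?_⟩
  intro p hp ν hν hsupp hm
  have hp0 : 0 < p := by linarith
  have hlog2 : Real.log 2 ≤ Real.log p := Real.log_le_log (by norm_num) hp
  have hl2 := Real.log_two_gt_d9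
  have hlog : (1:ℝ)/2 < Real.log p := by linarith
  obtain ⟨P, hPd, hPl, hP0, hP1, hPI⟩ := KM.exists_P ⌊Real.log p⌋₊
  set k := ⌊Real.log p⌋₊ with hk
  have hk1 : (k:ℝ) ≤ Real.log p := Nat.floor_le (by linarith)
  have hk2 : Real.log p < k + 1 := Nat.lt_floor_add_one _
  have hN : Real.log p ≤ ((2*k+1 : ℕ):ℝ) := by
    push_cast; linarith [(Nat.cast_nonneg k : (0:ℝ) ≤ k)]
  have hε : 0 ≤ p ^ (-60:ℝ) := by positivity
  have key := KM.disc_bound (ν := ν) (μ := kestenMcKay d) (L := 2 * d) (by linarith) hB hsupp hμB hε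
    (by positivity) P hP0 hP1 hPI (fun m h1 h2 => hm m h1 (by
      have h3 : (m:ℝ) ≤ ((6 * (2*k+1) : ℕ) : ℝ) := by exact_mod_cast h2.trans hPd
      push_cast at h3
      linarith))
  refine key.trans ?_
  have hlp : 0 < Real.log p := by linarith
  have hlp0 : Real.log p ≤ p := (Real.log_le_sub_one_of_pos hp0).trans (by linarith)
  have h1 : 3072 / ((2*k+1 : ℕ):ℝ) ≤ 3072 / Real.log p := by gcongr
  have h3pow : (3:ℝ)^(6*(2*k+1)) ≤ p ^ (59:ℝ) := by
    rw [Real.rpow_def_of_pos hp0, ← Real.rpow_natCast, Real.rpow_def_of_pos (by norm_num)]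
    apply Real.exp_le_exp.mpr
    have h3 : Real.log 3 ≤ 2 := by
      have := Real.log_le_sub_one_of_pos (show (0:ℝ) < 3 by norm_num)
      linarith
    have h3' : 0 ≤ Real.log 3 := Real.log_nonneg (by norm_num)
    push_cast
    have h4 : (6 * (2 * (k:ℝ) + 1)) ≤ 24 * Real.log p + 0 := by linarith
    nlinarith
  have h2 : p ^ (-60:ℝ) * KM.l1 P ≤ 768 / Real.log p := by
    calc p ^ (-60:ℝ) * KM.l1 P ≤ p ^ (-60:ℝ) * (768 * p ^ (59:ℝ)) := by
          gcongr
          exact hPl.trans (by gcongr)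
      _ = 768 * p ^ (-1:ℝ) := by
          rw [mul_left_comm, ← Real.rpow_add hp0]; norm_num
      _ = 768 / p := by rw [Real.rpow_neg_one, div_eq_mul_inv]
      _ ≤ _ := by gcongr
  have h3 : 2 * (2 * (d:ℝ)) * B * (3072 / ((2*k+1 : ℕ):ℝ)) ≤ 2 * (2 * (d:ℝ)) * B * (3072 / Real.log p) := by
    gcongr
  calc _ ≤ 2 * (2 * (2 * (d:ℝ)) * B * (3072 / Real.log p) + 768 / Real.log p) := by linarith
    _ = _ := by field_simp
end
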